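/- Let k ≥ 1 be an integer and let G be a planar simple graph with girth at least 7 and maximum degree Δ(G) ≥ 190 + 2k. Then the k-frugal chromatic number satisfies χ_k(G) ≤ ⌈(Δ(G) − 1)/k⌉ + 2. -/

import Mathlib

open SimpleGraph

/-- A drawing of a simple graph in the plane: vertices are mapped to distinct points,
edges to arcs (injective continuous curves parametrised on `[0,1]`) joining the images of
their endpoints, whose interiors avoid the vertex points and each other. -/
structure PlaneEmbedding {V : Type*} (G : SimpleGraph V) where
  pos : V → ℝ × ℝ
  inj : Function.Injective pos
  arc : G.edgeSet → ℝ → ℝ × ℝ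
  arc_cont : ∀ e, ContinuousOn (arc e) (Set.Icc 0 1)
  arc_inj : ∀ e, Set.InjOn (arc e) (Set.Icc 0 1)
  arc_ends : ∀ e : G.edgeSet, ∃ u v : V, (e : Sym2 V) = s(u, v) ∧
      arc e 0 = pos u ∧ arc e 1 = pos v
  arc_avoid : ∀ e : G.edgeSet, ∀ t ∈ Set.Ioo (0:ℝ) 1, arc e t ∉ Set.range pos
  arc_disjoint : ∀ e f : G.edgeSet, e ≠ f → ∀ s ∈ Set.Ioo (0:ℝ) 1, ∀ t ∈ Set.Ioo (0:ℝ) 1,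
      arc e s ≠ arc f t

/-- A graph is planar if it admits a drawing in the plane. -/
def SimpleGraph.IsPlanar {V : Type*} (G : SimpleGraph V) : Prop :=
  Nonempty (PlaneEmbedding G)

/-- A `k`-frugal colouring: a proper vertex colouring in which no colour appears more than
`k` times in the neighbourhood of any vertex. -/
def SimpleGraph.IsFrugalColoring {V α : Type*} (G : SimpleGraph V) (k : ℕ) (c : V → α) : Prop :=
  (∀ u v, G.Adj u v → c u ≠ c v) ∧
  ∀ (v : V) (a : α), {u | u ∈ G.neighborSet v ∧ c u = a}.ncard ≤ k

/-- The `k`-frugal chromatic number `χ_k(G)`: the least number of colours in a `k`-frugal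
colouring of `G`. -/
noncomputable def SimpleGraph.frugalChromaticNumber {V : Type*} (G : SimpleGraph V) (k : ℕ) : ℕ :=
  sInf {n : ℕ | ∃ c : V → ℕ, (∀ v, c v < n) ∧ G.IsFrugalColoring k c}

/-!
Fix `D ≥ Δ(G)`. A counterexample with the fewest edges has no vertex of degree one and, if `k ≥ 2`,
no vertex of degree two whose neighbours have total degree at most `D`: a colouring without the
edges at such a vertex extends greedily. If `k = 1`, such light vertices can still be recoloured
last. Hence a neighbour of a light vertex sees more than `D` vertices within distance two even if
the light ones are disregarded, and no eight-cycle contains two opposite light vertices and only two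
vertices of degree other than two.

Planarity and girth seven bound the number of edges by `7/5` of the number of vertices, so the
charges `10 * deg v - 28` have negative sum. After large vertices have supported their neighbours,
only two kinds of vertices near light ones lack charge. With the vertices of degree at least `D - 1`
they span planar bipartite graphs of girth at least nine and eight; the same density bound, applied
to these, shows that the surplus of the vertices of degree at least `D - 1` outweighs the deficit.

The density bound needs only that an edge closing a cycle of a drawing increases the number of faces
and that an edge borders at most two faces. By Eilenberg's criterion, whether a compact set
separates `p` from `q` is a question about continuous logarithms of `(z - p) / (z - q)`, so both
facts are proved by gluing logarithms along an arc, without the Jordan curve theorem.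
-/

/-! ### Continuous logarithms and complementary components -/

section ContinuousLogarithm

open Set Complex Topology Bornology

theorem isLocallyInjective_complex_exp : IsLocallyInjective exp := by
  refine IsLocalHomeomorph.isLocallyInjective ?_
  rw [isLocalHomeomorph_iff_isLocalHomeomorphOn_univ]
  exact isCoveringMapOn_exp.isLocalHomeomorphOn.mono fun w _ => exp_ne_zero w

theorem sub_eq_sub_of_exp_eq_exp {X : Type*} [TopologicalSpace X] {S : Set X}
    (hS : IsPreconnected S) {f g : X → ℂ} (hf : ContinuousOn f S) (hg : ContinuousOn g S)
    (h : ∀ x ∈ S, exp (f x) = exp (g x)) {x y : X} (hx : x ∈ S) (hy : y ∈ S) :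
    f x - f y = g x - g y := by
  have hfg : EqOn f (fun z => g z + (f y - g y)) S :=
    (T2Space.isSeparatedMap exp).eqOn_of_comp_eqOn isLocallyInjective_complex_exp hS hf
      (hg.add continuousOn_const)
      (fun z hz => by simp [exp_add, exp_sub, h z hz, h y hy]) hy (by simp)
  rw [hfg hx]
  ring

/-- `f` has a continuous logarithm on `S`. By Eilenberg's criterion, such logarithms of the
quotients `(z - p) / (z - q)` detect whether a plane compact set separates `p` from `q`. -/
def HasLogOn {X : Type*} [TopologicalSpace X] (f : X → ℂ) (S : Set X) : Prop :=
  ∃ g : X → ℂ, ContinuousOn g S ∧ ∀ x ∈ S, f x = exp (g x)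

namespace HasLogOn

variable {X : Type*} [TopologicalSpace X] {S : Set X} {f g : X → ℂ}

theorem congr (hf : HasLogOn f S) (h : EqOn g f S) : HasLogOn g S := by
  obtain ⟨l, hl, hle⟩ := hf
  exact ⟨l, hl, fun x hx => (h hx).trans (hle x hx)⟩

theorem mono {T : Set X} (hf : HasLogOn f S) (h : T ⊆ S) : HasLogOn f T := by
  obtain ⟨l, hl, hle⟩ := hf
  exact ⟨l, hl.mono h, fun x hx => hle x (h hx)⟩

theorem mul (hf : HasLogOn f S) (hg : HasLogOn g S) : HasLogOn (fun x => f x * g x) S := by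
  obtain ⟨l, hl, hle⟩ := hf
  obtain ⟨m, hm, hme⟩ := hg
  exact ⟨fun x => l x + m x, hl.add hm, fun x hx => by simp only [exp_add, hle x hx, hme x hx]⟩

theorem inv (hf : HasLogOn f S) : HasLogOn (fun x => (f x)⁻¹) S := by
  obtain ⟨l, hl, hle⟩ := hf
  exact ⟨fun x => -l x, hl.neg, fun x hx => by simp only [exp_neg, hle x hx]⟩

theorem of_mem_slitPlane (hf : ContinuousOn f S) (h : ∀ x ∈ S, f x ∈ slitPlane) : HasLogOn f S :=
  ⟨fun x => log (f x), hf.clog h, fun x hx => (exp_log (slitPlane_ne_zero (h x hx))).symm⟩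

theorem of_convex {E : Type*} [NormedAddCommGroup E] [NormedSpace ℝ E] {U : Set E}
    (hc : Convex ℝ U) (ho : IsOpen U) {f : E → ℂ} (hf : ContinuousOn f U)
    (h0 : ∀ z ∈ U, f z ≠ 0) : HasLogOn f U := by
  rcases U.eq_empty_or_nonempty with rfl | hne
  · exact ⟨f, by simp, by simp⟩
  have := hc.contractibleSpace hne
  have hs : IsSimplyConnected U := by
    rw [IsSimplyConnected]; infer_instance
  obtain ⟨g, hg, hge⟩ := exists_continuousOn_eqOn_exp_comp hs ho hf
    (by rintro ⟨z, hz, h⟩; exact h0 z hz h)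
  exact ⟨g, hg, fun z hz => (hge hz).symm⟩

theorem of_Icc {a b : ℝ} (hab : a ≤ b) {f : ℝ → ℂ} (hf : ContinuousOn f (Icc a b))
    (h0 : ∀ t ∈ Icc a b, f t ≠ 0) : HasLogOn f (Icc a b) := by
  obtain ⟨l, hl, hle⟩ := HasLogOn.of_convex (convex_univ (𝕜 := ℝ) (E := ℝ)) isOpen_univ
    (f := IccExtend hab ((Icc a b).domRestrict f))
    (continuousOn_iff_continuous_domRestrict.1 hf).Icc_extend'.continuousOn
    (fun t _ => h0 _ (projIcc a b hab t).2)
  refine ⟨l, hl.mono (subset_univ _), fun t ht => ?_⟩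
  rw [← hle t (mem_univ _), IccExtend_of_mem _ _ ht]
  rfl

end HasLogOn

theorem exists_continuous_log_comp_add_exp {H : ℂ → ℂ} {p : ℂ} (hH : ContinuousOn H {p}ᶜ)
    (h0 : ∀ z ≠ p, H z ≠ 0) :
    ∃ (L : ℂ → ℂ) (c : ℂ), Continuous L ∧ (∀ w, H (p + exp w) = exp (L w)) ∧
      ∀ w, L (w + 2 * Real.pi * I) - L w = c := by
  have hmem : ∀ w : ℂ, p + exp w ≠ p := fun w => by simp [exp_ne_zero]
  obtain ⟨L, hL, hLe⟩ := HasLogOn.of_convex (convex_univ (𝕜 := ℝ) (E := ℂ)) isOpen_univ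
    (f := fun w => H (p + exp w)) (hH.comp (by fun_prop) fun w _ => hmem w)
    (fun w _ => h0 _ (hmem w))
  refine ⟨L, L (0 + 2 * Real.pi * I) - L 0, continuousOn_univ.1 hL, fun w => hLe w (mem_univ w),
    fun w => ?_⟩
  have hper := sub_eq_sub_of_exp_eq_exp isPreconnected_univ
    (f := fun w => L (w + 2 * Real.pi * I)) (hL.comp (by fun_prop) (mapsTo_univ _ _)) hL
    (fun w _ => by simp only [← hLe _ (mem_univ _), exp_periodic w])
    (mem_univ w) (mem_univ 0)
  linear_combination hper

theorem eq_zero_of_eq_zpow_mul_of_eq_one {H s : ℂ → ℂ} {p : ℂ} {r R : ℝ} {n : ℤ}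
    (hr : 0 < r) (hR : 0 < R) (hH : ContinuousOn H {p}ᶜ) (h0 : ∀ z ≠ p, H z ≠ 0)
    (hs : ContinuousOn s (Metric.ball p r)) (hs0 : ∀ z ∈ Metric.ball p r, s z ≠ 0)
    (hnear : ∀ z ∈ Metric.ball p r, H z = (z - p) ^ n * s z)
    (hfar : ∀ z ∉ Metric.ball p R, H z = 1) : n = 0 := by
  obtain ⟨L, c, hL, hLe, hLc⟩ := exists_continuous_log_comp_add_exp hH h0
  have hdist : ∀ w : ℂ, dist (p + exp w) p = Real.exp w.re := fun w => by
    rw [dist_eq, add_sub_cancel_left, norm_exp]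
  have hc0 : c = 0 := by
    have h := sub_eq_sub_of_exp_eq_exp (convex_halfSpace_re_gt (Real.log R)).isPreconnected
      hL.continuousOn (g := fun _ => 0) continuousOn_const (fun w hw => by
        rw [← hLe, hfar, exp_zero]
        rw [Metric.mem_ball, hdist, not_lt]
        exact ((Real.log_lt_iff_lt_exp hR).1 hw).le)
      (x := (Real.log R + 1 : ℝ) + 2 * Real.pi * I) (y := (Real.log R + 1 : ℝ))
      (by simp [-ofReal_add]) (by simp [-ofReal_add])
    rw [← hLc, h, sub_zero]
  have hcn : c = n * (2 * Real.pi * I) := by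
    have hmem : ∀ w : ℂ, w.re < Real.log r → p + exp w ∈ Metric.ball p r := fun w hw => by
      rw [Metric.mem_ball, hdist]
      exact (Real.lt_log_iff_exp_lt hr).1 hw
    obtain ⟨S, hS, hSe⟩ := HasLogOn.of_convex (convex_ball p r) Metric.isOpen_ball hs hs0
    have h := sub_eq_sub_of_exp_eq_exp (convex_halfSpace_re_lt (Real.log r)).isPreconnected
      hL.continuousOn (g := fun w => n * w + S (p + exp w))
      (ContinuousOn.add (by fun_prop) (hS.comp (by fun_prop) hmem)) (fun w hw => by
        rw [← hLe, hnear _ (hmem w hw), add_sub_cancel_left, exp_add, ← hSe _ (hmem w hw),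
          exp_int_mul])
      (x := (Real.log r - 1 : ℝ) + 2 * Real.pi * I) (y := (Real.log r - 1 : ℝ))
      (by simp [-ofReal_sub]) (by simp [-ofReal_sub])
    rw [← hLc, h, exp_periodic]
    ring
  simpa [two_pi_I_ne_zero, Real.pi_ne_zero, hc0] using hcn

section ComplementaryComponents

variable {K : Set ℂ} {p q : ℂ}

theorem frontier_connectedComponentIn_compl_subset (hK : IsClosed K) (p : ℂ) :
    frontier (connectedComponentIn Kᶜ p) ⊆ K := by
  intro z hz
  by_contra hzK
  have ho : ∀ x, IsOpen (connectedComponentIn Kᶜ x) := fun _ =>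
    hK.isOpen_compl.connectedComponentIn
  have hzm : z ∈ connectedComponentIn Kᶜ z := mem_connectedComponentIn hzK
  obtain ⟨y, hyz, hyp⟩ := mem_closure_iff.1 (frontier_subset_closure hz) _ (ho z) hzm
  rw [frontier, (ho p).interior_eq] at hz
  exact hz.2 (by rwa [connectedComponentIn_eq hyp, ← connectedComponentIn_eq hyz])

theorem notMem_closure_connectedComponentIn_compl (hK : IsClosed K) (hq : q ∉ K)
    (hne : connectedComponentIn Kᶜ p ≠ connectedComponentIn Kᶜ q) :
    q ∉ closure (connectedComponentIn Kᶜ p) := by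
  rw [closure_eq_self_union_frontier]
  rintro (h | h)
  · exact hne (connectedComponentIn_eq h)
  · exact hq (frontier_connectedComponentIn_compl_subset hK p h)

theorem isPreconnected_setOf_lt_norm {R : ℝ} (hR : 0 < R) : IsPreconnected {z : ℂ | R < ‖z‖} := by
  have : {z : ℂ | R < ‖z‖} = exp '' {w : ℂ | Real.log R < w.re} := by
    ext z
    constructor
    · intro hz
      have hz0 : z ≠ 0 := norm_pos_iff.1 (hR.trans hz)
      exact ⟨log z, by simpa [log_re] using Real.log_lt_log hR hz, exp_log hz0⟩
    · rintro ⟨w, hw, rfl⟩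
      simpa [norm_exp] using (Real.log_lt_iff_lt_exp hR).1 hw
  rw [this]
  exact (convex_halfSpace_re_gt _).isPreconnected.image _ continuous_exp.continuousOn

theorem connectedComponentIn_compl_eq_of_not_isBounded (hK : IsBounded K)
    (hp : ¬ IsBounded (connectedComponentIn Kᶜ p))
    (hq : ¬ IsBounded (connectedComponentIn Kᶜ q)) :
    connectedComponentIn Kᶜ p = connectedComponentIn Kᶜ q := by
  obtain ⟨R, hR0, hR⟩ := hK.exists_pos_norm_le
  have hfar : ∀ x, ¬ IsBounded (connectedComponentIn Kᶜ x) →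
      ∃ z ∈ connectedComponentIn Kᶜ x, R < ‖z‖ := fun x hx => by
    by_contra! hcon
    exact hx (isBounded_iff_forall_norm_le.2 ⟨R, hcon⟩)
  obtain ⟨z, hz, hzR⟩ := hfar p hp
  obtain ⟨w, hw, hwR⟩ := hfar q hq
  have hsub : {z : ℂ | R < ‖z‖} ⊆ connectedComponentIn Kᶜ z :=
    (isPreconnected_setOf_lt_norm hR0).subset_connectedComponentIn hzR
      (fun y hy hyK => absurd (hR y hyK) (not_le.2 hy))
  rw [connectedComponentIn_eq hz, connectedComponentIn_eq hw]
  exact connectedComponentIn_eq (hsub hwR)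

theorem eq_zero_of_hasLogOn_zpow_mul (hK : IsCompact K) (hp : p ∉ K)
    (hb : IsBounded (connectedComponentIn Kᶜ p)) {s : ℂ → ℂ}
    (hs : ContinuousOn s (closure (connectedComponentIn Kᶜ p)))
    (hs0 : ∀ z ∈ closure (connectedComponentIn Kᶜ p), s z ≠ 0) {n : ℤ}
    (h : HasLogOn (fun z => (z - p) ^ n * s z) K) : n = 0 := by
  classical
  obtain ⟨g, hg, hge⟩ := h
  let U := connectedComponentIn Kᶜ p
  have hpU : p ∈ U := mem_connectedComponentIn hp
  obtain ⟨r, hr, hrU⟩ := Metric.isOpen_iff.1 hK.isClosed.isOpen_compl.connectedComponentIn p hpU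
  obtain ⟨R, hRU⟩ := hb.subset_ball p
  -- Dividing by an extension of `exp g` makes the function equal to `1` on the frontier of `U`,
  -- so that it can be continued by `1` outside `U`.
  obtain ⟨G, hG⟩ := ContinuousMap.exists_restrict_eq hK.isClosed
    ⟨K.domRestrict g, continuousOn_iff_continuous_domRestrict.mp hg⟩
  have hGg : ∀ z ∈ K, G z = g z := fun z hz => DFunLike.congr_fun hG ⟨z, hz⟩
  let σ : ℂ → ℂ := fun z => s z * exp (-G z)
  have hσ : ContinuousOn σ (closure U) := hs.mul (by fun_prop)
  have hσ0 : ∀ z ∈ closure U, σ z ≠ 0 := fun z hz => mul_ne_zero (hs0 z hz) (exp_ne_zero _)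
  let H : ℂ → ℂ := U.piecewise (fun z => (z - p) ^ n * σ z) (fun _ => 1)
  have hHU : ∀ z ∈ U, H z = (z - p) ^ n * σ z := fun z hz => piecewise_eq_of_mem _ _ _ hz
  have hHU' : ∀ z ∉ U, H z = 1 := fun z hz => piecewise_eq_of_notMem _ _ _ hz
  have hH : ContinuousOn H {p}ᶜ := by
    refine ContinuousOn.piecewise ?_ ?_ continuousOn_const
    · rintro z ⟨-, hz⟩
      have hzK := frontier_connectedComponentIn_compl_subset hK.isClosed p hz
      have hgz : (z - p) ^ n * s z = exp (g z) := hge z hzK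
      rw [← mul_assoc, hgz, hGg z hzK, ← exp_add, add_neg_cancel, exp_zero]
    · refine ContinuousOn.mul ?_ (hσ.mono inter_subset_right)
      exact ContinuousOn.zpow₀ (by fun_prop) n (fun z hz => Or.inl (sub_ne_zero.2 hz.1))
  have hH0 : ∀ z ≠ p, H z ≠ 0 := fun z hz => by
    by_cases hzU : z ∈ U
    · rw [hHU z hzU]
      exact mul_ne_zero (zpow_ne_zero _ (sub_ne_zero.2 hz)) (hσ0 z (subset_closure hzU))
    · rw [hHU' z hzU]
      exact one_ne_zero
  exact eq_zero_of_eq_zpow_mul_of_eq_one hr (dist_nonneg.trans_lt (hRU hpU)) hH hH0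
    (hσ.mono (hrU.trans subset_closure)) (fun z hz => hσ0 z (subset_closure (hrU hz)))
    (fun z hz => hHU z (hrU hz)) (fun z hz => hHU' z fun hzU => hz (hRU hzU))

theorem continuousOn_zpow_sub {S : Set ℂ} (hq : q ∉ S) (n : ℤ) :
    ContinuousOn (fun z => (z - q) ^ n) S :=
  ContinuousOn.zpow₀ (by fun_prop) n (fun z hz => Or.inl (sub_ne_zero.2 fun e => hq (e ▸ hz)))

theorem zpow_sub_ne_zero {S : Set ℂ} (hq : q ∉ S) (n : ℤ) :
    ∀ z ∈ S, (z - q) ^ n ≠ 0 := fun _ hz => zpow_ne_zero _ (sub_ne_zero.2 fun e => hq (e ▸ hz))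

theorem eq_zero_of_hasLogOn_prod_of_isBounded {ι : Type*} [Fintype ι] (hK : IsCompact K)
    {P : ι → ℂ} (hP : ∀ i, P i ∉ K)
    (hinj : Function.Injective fun i => connectedComponentIn Kᶜ (P i)) {n : ι → ℤ}
    (h : HasLogOn (fun z => ∏ i, (z - P i) ^ n i) K) {i : ι}
    (hb : IsBounded (connectedComponentIn Kᶜ (P i))) : n i = 0 := by
  classical
  have hcl : ∀ j ∈ Finset.univ.erase i, P j ∉ closure (connectedComponentIn Kᶜ (P i)) :=
    fun j hj => notMem_closure_connectedComponentIn_compl hK.isClosed (hP j)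
      (hinj.ne (Finset.ne_of_mem_erase hj).symm)
  refine eq_zero_of_hasLogOn_zpow_mul hK (hP i) hb
    (s := fun z => ∏ j ∈ Finset.univ.erase i, (z - P j) ^ n j)
    (continuousOn_finsetProd _ fun j hj => continuousOn_zpow_sub (hcl j hj) _)
    (fun z hz => Finset.prod_ne_zero_iff.2 fun j hj => zpow_sub_ne_zero (hcl j hj) _ z hz)
    (h.congr fun z _ =>
      Finset.mul_prod_erase _ (fun j => (z - P j) ^ n j) (Finset.mem_univ i))

theorem eq_zero_of_hasLogOn_prod {ι : Type*} [Fintype ι] (hK : IsCompact K) {P : ι → ℂ}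
    (hP : ∀ i, P i ∉ K) (hinj : Function.Injective fun i => connectedComponentIn Kᶜ (P i))
    {n : ι → ℤ} (h : HasLogOn (fun z => ∏ i, (z - P i) ^ n i) K) (hn : ∑ i, n i = 0) (i : ι) :
    n i = 0 := by
  by_cases hb : IsBounded (connectedComponentIn Kᶜ (P i))
  · exact eq_zero_of_hasLogOn_prod_of_isBounded hK hP hinj h hb
  · have hother : ∀ j ≠ i, n j = 0 := fun j hji =>
      eq_zero_of_hasLogOn_prod_of_isBounded hK hP hinj h <| by
        by_contra hbj
        exact hji (hinj (connectedComponentIn_compl_eq_of_not_isBounded hK.isBounded hbj hb))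
    rwa [Fintype.sum_eq_single i hother] at hn

theorem continuousOn_sub_div_sub (hq : q ∉ K) : ContinuousOn (fun z => (z - p) / (z - q)) K :=
  ContinuousOn.div (by fun_prop) (by fun_prop) (fun z hz => sub_ne_zero.2 fun e => hq (e ▸ hz))

theorem sub_div_sub_ne_zero (hp : p ∉ K) (hq : q ∉ K) : ∀ z ∈ K, (z - p) / (z - q) ≠ 0 :=
  fun _ hz => div_ne_zero (sub_ne_zero.2 fun e => hp (e ▸ hz)) (sub_ne_zero.2 fun e => hq (e ▸ hz))

theorem sub_div_sub_mem_slitPlane {z : ℂ} (h : dist p q < dist z q) :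
    (z - p) / (z - q) ∈ slitPlane := by
  have hq : z - q ≠ 0 := sub_ne_zero.2 (dist_pos.1 (dist_nonneg.trans_lt h))
  have e : (z - p) / (z - q) = 1 - (p - q) / (z - q) := by field_simp; ring
  have hlt : ‖(p - q) / (z - q)‖ < 1 := by
    rwa [norm_div, div_lt_one (norm_pos_iff.2 hq), ← dist_eq, ← dist_eq]
  rw [e]
  exact mem_slitPlane_of_norm_lt_one (by rwa [norm_neg])

theorem hasLogOn_sub_div_sub_of_mem_component (hK : IsClosed K) (hp : p ∉ K)
    (hq : q ∈ connectedComponentIn Kᶜ p) : HasLogOn (fun z => (z - p) / (z - q)) K := by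
  have hne : ∀ {x}, x ∈ connectedComponentIn Kᶜ p → ∀ z ∈ K, z - x ≠ 0 := fun {x} hx z hz =>
    sub_ne_zero.2 fun e => connectedComponentIn_subset _ _ hx (e ▸ hz)
  refine isPreconnected_connectedComponentIn.induction₂
    (fun p q => HasLogOn (fun z => (z - p) / (z - q)) K) ?_ ?_ ?_
    (mem_connectedComponentIn hp) hq
  · intro x hx
    have hxK : x ∈ Kᶜ := connectedComponentIn_subset _ _ hx
    obtain ⟨r, hr, hrK⟩ := Metric.isOpen_iff.1 hK.isOpen_compl x hxK
    refine mem_nhdsWithin_of_mem_nhds ?_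
    filter_upwards [Metric.ball_mem_nhds x hr] with y hy
    have hslit : ∀ z ∈ K, (z - y) / (z - x) ∈ slitPlane := fun z hz =>
      sub_div_sub_mem_slitPlane <| (Metric.mem_ball.1 hy).trans_le <|
        not_lt.1 fun hzx => hrK (Metric.mem_ball.2 hzx) hz
    exact (HasLogOn.of_mem_slitPlane (continuousOn_sub_div_sub hxK) hslit).inv.congr
      fun _ _ => (inv_div _ _).symm
  · rintro x y w - hy - hxy hyw
    exact (hxy.mul hyw).congr fun z hz => (div_mul_div_cancel₀ (hne hy z hz)).symm
  · rintro x y - - hxy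
    exact hxy.inv.congr fun _ _ => (inv_div _ _).symm

theorem connectedComponentIn_compl_eq_of_hasLogOn (hK : IsCompact K) (hp : p ∉ K) (hq : q ∉ K)
    (h : HasLogOn (fun z => (z - p) / (z - q)) K) :
    connectedComponentIn Kᶜ p = connectedComponentIn Kᶜ q := by
  by_contra hne
  have hinj : Function.Injective fun i => connectedComponentIn Kᶜ (![p, q] i) := by
    intro i j
    fin_cases i <;> fin_cases j <;> simp [hne, Ne.symm hne]
  have := eq_zero_of_hasLogOn_prod hK (P := ![p, q]) (n := ![1, -1])
    (Fin.forall_fin_two.2 ⟨hp, hq⟩) hinj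
    (h.congr fun z _ => by simp [Fin.prod_univ_two, div_eq_mul_inv]) (by simp) 0
  exact one_ne_zero this

end ComplementaryComponents

end ContinuousLogarithm

/-! ### Adding an arc to a compact set -/

section PlaneArcs

open Set Complex Topology

theorem continuousOn_invFunOn_image {X Y : Type*} [Nonempty X] [TopologicalSpace X]
    [TopologicalSpace Y] [T2Space Y] {f : X → Y} {s : Set X} (hs : IsCompact s)
    (hf : ContinuousOn f s) (hinj : InjOn f s) :
    ContinuousOn (Function.invFunOn f s) (f '' s) := by
  rw [continuousOn_iff_isClosed]
  intro t ht
  refine ⟨f '' (s ∩ t),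
    ((hs.inter_right ht).image_of_continuousOn (hf.mono inter_subset_left)).isClosed, ?_⟩
  ext y
  constructor
  · rintro ⟨hy, x, hx, rfl⟩
    rw [mem_preimage, hinj.leftInvOn_invFunOn hx] at hy
    exact ⟨⟨x, ⟨hx, hy⟩, rfl⟩, x, hx, rfl⟩
  · rintro ⟨⟨x, ⟨hx, hxt⟩, rfl⟩, hy⟩
    exact ⟨by rwa [mem_preimage, hinj.leftInvOn_invFunOn hx], hy⟩

theorem HasLogOn.of_arc {γ : ℝ → ℂ} {a b : ℝ} (hab : a ≤ b) (hγ : ContinuousOn γ (Icc a b))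
    (hinj : InjOn γ (Icc a b)) {f : ℂ → ℂ} (hf : ContinuousOn f (γ '' Icc a b))
    (h0 : ∀ z ∈ γ '' Icc a b, f z ≠ 0) : HasLogOn f (γ '' Icc a b) := by
  obtain ⟨l, hl, hle⟩ := HasLogOn.of_Icc hab (hf.comp hγ (mapsTo_image _ _))
    (fun t ht => h0 _ (mem_image_of_mem _ ht))
  refine ⟨fun z => l (Function.invFunOn γ (Icc a b) z),
    hl.comp (continuousOn_invFunOn_image isCompact_Icc hγ hinj)
      (fun z hz => Function.invFunOn_mem hz), ?_⟩
  rintro _ ⟨t, ht, rfl⟩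
  simpa only [Function.comp_apply, hinj.leftInvOn_invFunOn ht] using hle t ht

/-- `γ` is an arc meeting the set `K` exactly in its two endpoints: the shape in which the edges
of a drawing are added one after the other. -/
structure IsEar (K : Set ℂ) (γ : ℝ → ℂ) : Prop where
  cont : ContinuousOn γ (Icc 0 1)
  inj : InjOn γ (Icc 0 1)
  zero_mem : γ 0 ∈ K
  one_mem : γ 1 ∈ K
  avoid : ∀ t ∈ Ioo (0 : ℝ) 1, γ t ∉ K

namespace IsEar

variable {K : Set ℂ} {γ : ℝ → ℂ}

theorem isCompact_image (h : IsEar K γ) : IsCompact (γ '' Icc 0 1) :=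
  isCompact_Icc.image_of_continuousOn h.cont

theorem zero_mem_image (γ : ℝ → ℂ) : γ 0 ∈ γ '' Icc 0 1 := ⟨0, by simp, rfl⟩

theorem one_mem_image (γ : ℝ → ℂ) : γ 1 ∈ γ '' Icc 0 1 := ⟨1, by simp, rfl⟩

theorem eq_endpoint_of_mem (h : IsEar K γ) {z : ℂ} (hz : z ∈ K) (hz' : z ∈ γ '' Icc 0 1) :
    z = γ 0 ∨ z = γ 1 := by
  obtain ⟨t, ht, rfl⟩ := hz'
  rcases eq_or_lt_of_le ht.1 with rfl | h0
  · exact Or.inl rfl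
  rcases eq_or_lt_of_le ht.2 with rfl | h1
  · exact Or.inr rfl
  · exact absurd hz (h.avoid t ⟨h0, h1⟩)

theorem hasLogOn_union (h : IsEar K γ) (hK : IsClosed K) {f G E : ℂ → ℂ} (hG : ContinuousOn G K)
    (hGe : ∀ z ∈ K, f z = exp (G z)) (hE : ContinuousOn E (γ '' Icc 0 1))
    (hEe : ∀ z ∈ γ '' Icc 0 1, f z = exp (E z)) (h0 : G (γ 0) = E (γ 0))
    (h1 : G (γ 1) = E (γ 1)) : HasLogOn f (K ∪ γ '' Icc 0 1) := by
  classical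
  have heq : EqOn (K.piecewise G E) E (γ '' Icc 0 1) := fun z hz => by
    by_cases hzK : z ∈ K
    · rw [piecewise_eq_of_mem _ _ _ hzK]
      rcases h.eq_endpoint_of_mem hzK hz with rfl | rfl
      exacts [h0, h1]
    · exact piecewise_eq_of_notMem _ _ _ hzK
  refine ⟨K.piecewise G E, ContinuousOn.union_of_isClosed (hG.congr (piecewise_eqOn _ _ _))
    (hE.congr heq) hK h.isCompact_image.isClosed, ?_⟩
  rintro z (hz | hz)
  · rw [piecewise_eq_of_mem _ _ _ hz, hGe z hz]
  · rw [heq hz, hEe z hz]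

theorem exists_log_and_int (h : IsEar K γ) (hK : IsClosed K) {p q : ℂ}
    (hp : p ∉ K ∪ γ '' Icc 0 1) (hq : q ∉ K ∪ γ '' Icc 0 1)
    (hpq : connectedComponentIn Kᶜ p = connectedComponentIn Kᶜ q) :
    ∃ (G E : ℂ → ℂ) (a : ℤ), ContinuousOn G K ∧ ContinuousOn E (γ '' Icc 0 1) ∧
      (∀ z ∈ K, (z - p) / (z - q) = exp (G z)) ∧
      (∀ z ∈ γ '' Icc 0 1, (z - p) / (z - q) = exp (E z)) ∧ G (γ 0) = E (γ 0) ∧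
      G (γ 1) = E (γ 1) + a * (2 * Real.pi * I) := by
  rw [mem_union, not_or] at hp hq
  obtain ⟨G, hG, hGe⟩ := hasLogOn_sub_div_sub_of_mem_component hK hp.1
    (hpq.symm ▸ mem_connectedComponentIn (x := q) hq.1)
  obtain ⟨E, hE, hEe⟩ := HasLogOn.of_arc zero_le_one h.cont h.inj
    (continuousOn_sub_div_sub (p := p) hq.2) (sub_div_sub_ne_zero hp.2 hq.2)
  have hc0 : exp (G (γ 0) - E (γ 0)) = 1 := by
    rw [exp_sub, ← hEe _ (zero_mem_image γ), ← hGe _ h.zero_mem,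
      div_self (sub_div_sub_ne_zero hp.1 hq.1 _ h.zero_mem)]
  have hc1 : exp (G (γ 1)) = exp (E (γ 1) + (G (γ 0) - E (γ 0))) := by
    rw [exp_add, hc0, ← hEe _ (one_mem_image γ), ← hGe _ h.one_mem, mul_one]
  obtain ⟨a, ha⟩ := exp_eq_exp_iff_exists_int.1 hc1
  refine ⟨G, fun z => E z + (G (γ 0) - E (γ 0)), a, hG, hE.add continuousOn_const, hGe,
    fun z hz => ?_, by ring, ha⟩
  rw [exp_add, hc0, mul_one]
  exact hEe z hz

theorem connectedComponentIn_compl_eq_of_disjoint {A B : Set ℂ} (h : IsEar (A ∪ B) γ)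
    (hA : IsCompact A) (hB : IsCompact B) (hAB : Disjoint A B) (h0 : γ 0 ∈ A) (h1 : γ 1 ∈ B)
    {p q : ℂ} (hp : p ∉ A ∪ B ∪ γ '' Icc 0 1) (hq : q ∉ A ∪ B ∪ γ '' Icc 0 1)
    (hpq : connectedComponentIn (A ∪ B)ᶜ p = connectedComponentIn (A ∪ B)ᶜ q) :
    connectedComponentIn (A ∪ B ∪ γ '' Icc 0 1)ᶜ p =
      connectedComponentIn (A ∪ B ∪ γ '' Icc 0 1)ᶜ q := by
  classical
  have hK : IsCompact (A ∪ B) := hA.union hB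
  obtain ⟨G, E, a, hG, hE, hGe, hEe, hGE0, hGE1⟩ := h.exists_log_and_int hK.isClosed hp hq hpq
  -- The logarithm on `B` can be shifted independently of the one on `A`.
  let G' : ℂ → ℂ := A.piecewise G fun z => G z - a * (2 * Real.pi * I)
  have hG'A : EqOn G' G A := piecewise_eqOn _ _ _
  have hG'B : EqOn G' (fun z => G z - a * (2 * Real.pi * I)) B := fun z hz =>
    piecewise_eq_of_notMem _ _ _ fun hzA => Set.disjoint_left.1 hAB hzA hz
  have hG' : ContinuousOn G' (A ∪ B) := ContinuousOn.union_of_isClosed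
    ((hG.mono subset_union_left).congr hG'A)
    (((hG.mono subset_union_right).sub continuousOn_const).congr hG'B) hA.isClosed hB.isClosed
  have hG'e : ∀ z ∈ A ∪ B, (z - p) / (z - q) = exp (G' z) := by
    rintro z (hz | hz)
    · rw [hG'A hz, hGe z (Or.inl hz)]
    · rw [hG'B hz, exp_sub, exp_int_mul_two_pi_mul_I, div_one, hGe z (Or.inr hz)]
  exact connectedComponentIn_compl_eq_of_hasLogOn (hK.union h.isCompact_image) hp hq
    (h.hasLogOn_union hK.isClosed hG' hG'e hE hEe (by rw [hG'A h0, hGE0])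
      (by simp only [hG'B h1, hGE1, add_sub_cancel_right]))

theorem connectedComponentIn_compl_eq_or (h : IsEar K γ) (hK : IsCompact K) {p q r : ℂ}
    (hp : p ∉ K ∪ γ '' Icc 0 1) (hq : q ∉ K ∪ γ '' Icc 0 1) (hr : r ∉ K ∪ γ '' Icc 0 1)
    (hpq : connectedComponentIn Kᶜ p = connectedComponentIn Kᶜ q)
    (hpr : connectedComponentIn Kᶜ p = connectedComponentIn Kᶜ r) :
    connectedComponentIn (K ∪ γ '' Icc 0 1)ᶜ p = connectedComponentIn (K ∪ γ '' Icc 0 1)ᶜ q ∨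
    connectedComponentIn (K ∪ γ '' Icc 0 1)ᶜ p = connectedComponentIn (K ∪ γ '' Icc 0 1)ᶜ r ∨
    connectedComponentIn (K ∪ γ '' Icc 0 1)ᶜ q = connectedComponentIn (K ∪ γ '' Icc 0 1)ᶜ r := by
  by_contra! hne
  obtain ⟨hpq', hpr', hqr'⟩ := hne
  obtain ⟨G, E, a, hG, hE, hGe, hEe, hGE0, hGE1⟩ := h.exists_log_and_int hK.isClosed hp hq hpq
  obtain ⟨G', E', b, hG', hE', hGe', hEe', hGE0', hGE1'⟩ :=
    h.exists_log_and_int hK.isClosed hp hr hpr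
  have hKγ : IsCompact (K ∪ γ '' Icc 0 1) := hK.union h.isCompact_image
  -- The jumps `a` and `b` of the two logarithms along `γ` cancel in this combination.
  have hlog : HasLogOn (fun z => ((z - p) / (z - q)) ^ b * ((z - p) / (z - r)) ^ (-a))
      (K ∪ γ '' Icc 0 1) :=
    h.hasLogOn_union hK.isClosed
      (G := fun z => b * G z + (-a : ℤ) * G' z) (E := fun z => b * E z + (-a : ℤ) * E' z)
      (by fun_prop) (fun z hz => by rw [exp_add, exp_int_mul, exp_int_mul, hGe z hz, hGe' z hz])
      (by fun_prop) (fun z hz => by rw [exp_add, exp_int_mul, exp_int_mul, hEe z hz, hEe' z hz])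
      (by rw [hGE0, hGE0']) (by rw [hGE1, hGE1']; push_cast; ring)
  have hprod : HasLogOn (fun z => ∏ i, (z - ![p, q, r] i) ^ (![b - a, -b, a] i))
      (K ∪ γ '' Icc 0 1) := hlog.congr fun z hz => by
    have hz0 : ∀ x ∉ K ∪ γ '' Icc 0 1, z - x ≠ 0 := fun x hx => sub_ne_zero.2 fun e => hx (e ▸ hz)
    have hzp := hz0 p hp
    have hzq := hz0 q hq
    have hzr := hz0 r hr
    simp only [Fin.prod_univ_three, Matrix.cons_val, div_zpow, zpow_sub₀ hzp, zpow_neg]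
    field_simp
  have hinj : Function.Injective fun i =>
      connectedComponentIn (K ∪ γ '' Icc 0 1)ᶜ (![p, q, r] i) := by
    intro i j
    fin_cases i <;> fin_cases j <;>
      simp [-compl_union, hpq', hpr', hqr', Ne.symm hpq', Ne.symm hpr', Ne.symm hqr']
  have hP : ∀ i, ![p, q, r] i ∉ K ∪ γ '' Icc 0 1 := by
    intro i
    fin_cases i
    exacts [hp, hq, hr]
  have ha : a = 0 := eq_zero_of_hasLogOn_prod hKγ hP hinj hprod
    (by simp [Fin.sum_univ_three]; ring) 2
  exact hpq' (connectedComponentIn_compl_eq_of_hasLogOn hKγ hp hq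
    (h.hasLogOn_union hK.isClosed hG hGe hE hEe hGE0 (by rw [hGE1, ha]; simp)))

end IsEar

theorem HasLogOn.union_of_isOpen {X : Type*} [TopologicalSpace X] {f l m : X → ℂ} {U W : Set X}
    (hU : IsOpen U) (hW : IsOpen W) (hl : ContinuousOn l U) (hle : ∀ x ∈ U, f x = exp (l x))
    (hm : ContinuousOn m W) (hme : ∀ x ∈ W, f x = exp (m x))
    (hconst : ∀ x ∈ U ∩ W, ∀ y ∈ U ∩ W, l x - m x = l y - m y) : HasLogOn f (U ∪ W) := by
  classical
  obtain ⟨c, hc1, hc⟩ : ∃ c : ℂ, exp c = 1 ∧ ∀ x ∈ U ∩ W, l x = m x + c := by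
    rcases (U ∩ W).eq_empty_or_nonempty with he | ⟨y, hy⟩
    · exact ⟨0, exp_zero, by simp [he]⟩
    · refine ⟨l y - m y, ?_, fun x hx => by linear_combination hconst x hx y hy⟩
      rw [exp_sub, ← hle y hy.1, hme y hy.2, div_self (exp_ne_zero _)]
  have hL : EqOn (U.piecewise l fun x => m x + c) (fun x => m x + c) W := fun x hx => by
    by_cases hxU : x ∈ U
    · rw [piecewise_eq_of_mem _ _ _ hxU, hc x ⟨hxU, hx⟩]
    · exact piecewise_eq_of_notMem _ _ _ hxU
  refine ⟨U.piecewise l fun x => m x + c, ContinuousOn.union_of_isOpen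
    (hl.congr (piecewise_eqOn _ _ _)) ((hm.add continuousOn_const).congr hL) hU hW, ?_⟩
  rintro x (hx | hx)
  · rw [piecewise_eq_of_mem _ _ _ hx, hle x hx]
  · rw [hL hx, exp_add, hc1, mul_one, hme x hx]

theorem not_hasLogOn_sub_punctured_ball (x : ℂ) {r : ℝ} (hr : 0 < r) :
    ¬ HasLogOn (fun p => x - p) (Metric.ball x r \ {x}) := by
  rintro ⟨L, hL, hLe⟩
  have hmem : ∀ w : ℂ, w.re < Real.log r → x - exp w ∈ Metric.ball x r \ {x} := fun w hw => by
    refine ⟨?_, by simp [exp_ne_zero]⟩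
    rw [Metric.mem_ball, dist_eq, sub_sub_cancel_left, norm_neg, norm_exp]
    exact (Real.lt_log_iff_exp_lt hr).1 hw
  have h := sub_eq_sub_of_exp_eq_exp (convex_halfSpace_re_lt (Real.log r)).isPreconnected
    (f := fun w => L (x - exp w)) (g := id) (hL.comp (by fun_prop) hmem) continuousOn_id
    (fun w hw => by rw [← hLe _ (hmem w hw)]; simp)
    (x := (Real.log r - 1 : ℝ) + 2 * Real.pi * I)
    (y := (Real.log r - 1 : ℝ)) (by simp [-ofReal_sub]) (by simp [-ofReal_sub])
  rw [exp_periodic] at h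
  simp [Real.pi_ne_zero] at h

/-- `δ` is a continuous logarithm on `U` of `p ↦ (v - p) / (u - p)` that measures the variation
from `u` to `v` of logarithms on `S`: its increment from `q` to `p` is the variation of any
continuous logarithm of `z ↦ (z - p) / (z - q)` on `S`. -/
structure IsLogVariation (S U : Set ℂ) (u v : ℂ) (δ : ℂ → ℂ) : Prop where
  cont : ContinuousOn δ U
  exp_eq : ∀ p ∈ U, (v - p) / (u - p) = exp (δ p)
  sub_eq : ∀ p ∈ U, ∀ q ∈ U, ∀ g : ℂ → ℂ, ContinuousOn g S →
    (∀ z ∈ S, (z - p) / (z - q) = exp (g z)) → δ p - δ q = g v - g u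

theorem exists_isLogVariation_ball {S : Set ℂ} (hS : IsPreconnected S) {x : ℂ} {r : ℝ}
    (hr : 0 < r) (hSr : ∀ z ∈ S, r ≤ dist z x) {u v : ℂ} (hu : u ∈ S) (hv : v ∈ S) :
    ∃ ψ, IsLogVariation S (Metric.ball x r) u v ψ := by
  have hslit : ∀ p ∈ Metric.ball x r, ∀ z ∈ S, (z - p) / (z - x) ∈ slitPlane := fun p hp z hz =>
    sub_div_sub_mem_slitPlane ((Metric.mem_ball.1 hp).trans_le (hSr z hz))
  have hne : ∀ z ∈ S, z - x ≠ 0 := fun z hz =>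
    sub_ne_zero.2 (dist_pos.1 (hr.trans_le (hSr z hz)))
  have hlogS : ∀ p ∈ Metric.ball x r, ContinuousOn (fun z => log ((z - p) / (z - x))) S :=
    fun p hp => (continuousOn_sub_div_sub fun hx => hne x hx (sub_self x)).clog (hslit p hp)
  have hlogB : ∀ z ∈ S, ContinuousOn (fun p => log ((z - p) / (z - x))) (Metric.ball x r) :=
    fun z hz => ContinuousOn.clog (by fun_prop) fun p hp => hslit p hp z hz
  have hexp : ∀ p ∈ Metric.ball x r, ∀ z ∈ S,
      exp (log ((z - p) / (z - x))) = (z - p) / (z - x) :=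
    fun p hp z hz => exp_log (slitPlane_ne_zero (hslit p hp z hz))
  refine ⟨fun p => log ((v - p) / (v - x)) - log ((u - p) / (u - x)) + log ((v - x) / (u - x)),
    ((hlogB v hv).sub (hlogB u hu)).add continuousOn_const, fun p hp => ?_,
    fun p hp q hq g hg hge => ?_⟩
  · rw [exp_add, exp_sub, hexp p hp v hv, hexp p hp u hu,
      exp_log (div_ne_zero (hne v hv) (hne u hu))]
    have := hne v hv
    have := hne u hu
    field_simp
  · have h := sub_eq_sub_of_exp_eq_exp hS hg
      (g := fun z => log ((z - p) / (z - x)) - log ((z - q) / (z - x)))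
      ((hlogS p hp).sub (hlogS q hq)) (fun z hz => by
        rw [← hge z hz, exp_sub, hexp p hp z hz, hexp q hq z hz,
          div_div_div_cancel_right₀ (hne z hz)]) hv hu
    linear_combination -h

section Curve

variable {γ : ℝ → ℂ} {a b : ℝ}

theorem exists_log_curve_variation (hab : a ≤ b) (hγ : ContinuousOn γ (Icc a b)) :
    ∃ δ : ℂ → ℂ, (∀ p ∉ γ '' Icc a b, (γ b - p) / (γ a - p) = exp (δ p)) ∧
      ∀ p ∉ γ '' Icc a b, ∀ q ∉ γ '' Icc a b, ∀ g : ℂ → ℂ, ContinuousOn g (γ '' Icc a b) →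
        (∀ z ∈ γ '' Icc a b, (z - p) / (z - q) = exp (g z)) → δ p - δ q = g (γ b) - g (γ a) := by
  have hne : ∀ p ∉ γ '' Icc a b, ∀ t ∈ Icc a b, γ t - p ≠ 0 := fun p hp t ht =>
    sub_ne_zero.2 fun e => hp ⟨t, ht, e⟩
  have hlog : ∀ p, ∃ l : ℝ → ℂ, p ∉ γ '' Icc a b →
      ContinuousOn l (Icc a b) ∧ ∀ t ∈ Icc a b, γ t - p = exp (l t) := fun p => by
    by_cases hp : p ∈ γ '' Icc a b
    · exact ⟨0, fun h => absurd hp h⟩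
    · obtain ⟨l, hl⟩ := HasLogOn.of_Icc hab (hγ.sub continuousOn_const) (hne p hp)
      exact ⟨l, fun _ => hl⟩
  choose l hl using hlog
  have ha : a ∈ Icc a b := left_mem_Icc.2 hab
  have hb : b ∈ Icc a b := right_mem_Icc.2 hab
  refine ⟨fun p => l p b - l p a, fun p hp => ?_, fun p hp q hq g hg hge => ?_⟩
  · rw [exp_sub, (hl p hp).2 a ha, (hl p hp).2 b hb]
  · have h := sub_eq_sub_of_exp_eq_exp isPreconnected_Icc (hl p hp).1
      (g := fun t => l q t + g (γ t)) ((hl q hq).1.add (hg.comp hγ (mapsTo_image _ _)))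
      (fun t ht => by
        rw [exp_add, ← (hl p hp).2 t ht, ← (hl q hq).2 t ht, ← hge _ (mem_image_of_mem _ ht),
          mul_div_cancel₀ _ (hne q hq t ht)]) hb ha
    linear_combination h

theorem exists_isLogVariation_curve (hab : a ≤ b) (hγ : ContinuousOn γ (Icc a b)) :
    ∃ δ, IsLogVariation (γ '' Icc a b) (γ '' Icc a b)ᶜ (γ a) (γ b) δ := by
  obtain ⟨δ, hδe, hδ⟩ := exists_log_curve_variation hab hγ
  refine ⟨δ, fun q hq => ContinuousAt.continuousWithinAt ?_, hδe, hδ⟩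
  have hcl : IsClosed (γ '' Icc a b) := (isCompact_Icc.image_of_continuousOn hγ).isClosed
  obtain ⟨r, hr, hball⟩ := Metric.isOpen_iff.1 hcl.isOpen_compl q hq
  have hlocal : ∀ p ∈ Metric.ball q r,
      δ p = log ((γ b - p) / (γ b - q)) - log ((γ a - p) / (γ a - q)) + δ q := fun p hp => by
    have hslit : ∀ z ∈ γ '' Icc a b, (z - p) / (z - q) ∈ slitPlane := fun z hz =>
      sub_div_sub_mem_slitPlane <| (Metric.mem_ball.1 hp).trans_le <|
        not_lt.1 fun hzq => hball (Metric.mem_ball.2 hzq) hz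
    rw [← hδ p (hball hp) q hq (fun z => log ((z - p) / (z - q)))
      ((continuousOn_sub_div_sub hq).clog hslit)
      (fun z hz => (exp_log (slitPlane_ne_zero (hslit z hz))).symm), sub_add_cancel]
  have hlog : ∀ t ∈ Icc a b, ContinuousAt (fun p => log ((γ t - p) / (γ t - q))) q := by
    intro t ht
    have h0 : γ t - q ≠ 0 := sub_ne_zero.2 fun e => hq ⟨t, ht, e⟩
    exact ContinuousAt.clog (by fun_prop) (by simp [div_self h0])
  refine ContinuousAt.congr
    (f := fun p => log ((γ b - p) / (γ b - q)) - log ((γ a - p) / (γ a - q)) + δ q)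
    (((hlog b (right_mem_Icc.2 hab)).sub
      (hlog a (left_mem_Icc.2 hab))).add continuousAt_const) ?_
  filter_upwards [Metric.ball_mem_nhds q hr] with p hp using (hlocal p hp).symm

end Curve

theorem IsLogVariation.hasLogOn_union {S S₁ S₂ U₁ U₂ B : Set ℂ} {u x v : ℂ} {ψ δ₁ δ₂ : ℂ → ℂ}
    (hψ : IsLogVariation S B u v ψ) (h₁ : IsLogVariation S₁ U₁ u x δ₁)
    (h₂ : IsLogVariation S₂ U₂ x v δ₂) (hB : IsOpen B) (hU₁ : IsOpen U₁) (hU₂ : IsOpen U₂)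
    (hvB : v ∉ B)
    (hlog : ∀ p ∈ B ∩ U₁ ∩ U₂, ∀ q ∈ B ∩ U₁ ∩ U₂,
      HasLogOn (fun z => (z - p) / (z - q)) (S ∪ S₁ ∪ S₂)) :
    HasLogOn (fun p => (x - p) / (u - p)) (B ∩ U₁ ∪ B ∩ U₂) := by
  refine HasLogOn.union_of_isOpen (hB.inter hU₁) (hB.inter hU₂) (h₁.cont.mono inter_subset_right)
    (fun p hp => h₁.exp_eq p hp.2) (m := fun p => ψ p - δ₂ p)
    ((hψ.cont.mono inter_subset_left).sub (h₂.cont.mono inter_subset_right)) (fun p hp => ?_)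
    (fun p hp q hq => ?_)
  · have hvp : v - p ≠ 0 := sub_ne_zero.2 fun e => hvB (e ▸ hp.1)
    rw [exp_sub, ← hψ.exp_eq p hp.1, ← h₂.exp_eq p hp.2, div_div_div_cancel_left' _ _ hvp]
  · obtain ⟨g, hg, hge⟩ := hlog p ⟨hp.1, hp.2.2⟩ q ⟨hq.1, hq.2.2⟩
    have e := hψ.sub_eq p hp.1.1 q hq.1.1 g
      (hg.mono (subset_union_left.trans subset_union_left)) fun z hz => hge z (Or.inl (Or.inl hz))
    have e₁ := h₁.sub_eq p hp.1.2 q hq.1.2 g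
      (hg.mono (subset_union_right.trans subset_union_left)) fun z hz => hge z (Or.inl (Or.inr hz))
    have e₂ := h₂.sub_eq p hp.2.2 q hq.2.2 g (hg.mono subset_union_right) fun z hz =>
      hge z (Or.inr hz)
    linear_combination e₁ + e₂ - e

namespace IsEar

variable {K : Set ℂ} {γ : ℝ → ℂ}

theorem image_Icc_inter_subset (h : IsEar K γ) {t : ℝ} (ht : t ∈ Icc (0 : ℝ) 1) :
    γ '' Icc 0 t ∩ γ '' Icc t 1 ⊆ {γ t} := by
  rintro _ ⟨⟨s, hs, rfl⟩, ⟨s', hs', hss'⟩⟩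
  obtain rfl := h.inj (Icc_subset_Icc_left ht.1 hs') (Icc_subset_Icc_right ht.2 hs) hss'
  rw [le_antisymm hs.2 hs'.1, mem_singleton_iff]

/-- The variations of logarithms along the two halves of `γ` glue to a logarithm around `γ t`. -/
theorem hasLogOn_of_not_separated (h : IsEar K γ) (hK : IsClosed K) {S : Set ℂ}
    (hS : IsPreconnected S) (hSK : S ⊆ K) (h0 : γ 0 ∈ S) (h1 : γ 1 ∈ S) {t : ℝ}
    (ht : t ∈ Icc (0 : ℝ) 1) {r : ℝ} (hr : 0 < r) (hball : Metric.ball (γ t) r ⊆ Kᶜ)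
    (hsep : ∀ p ∈ Metric.ball (γ t) r \ γ '' Icc 0 1, ∀ q ∈ Metric.ball (γ t) r \ γ '' Icc 0 1,
      connectedComponentIn (K ∪ γ '' Icc 0 1)ᶜ p = connectedComponentIn (K ∪ γ '' Icc 0 1)ᶜ q) :
    HasLogOn (fun p => (γ t - p) / (γ 0 - p)) (Metric.ball (γ t) r \ {γ t}) := by
  have hhalves : γ '' Icc 0 1 = γ '' Icc 0 t ∪ γ '' Icc t 1 := by
    rw [← image_union, Icc_union_Icc_eq_Icc ht.1 ht.2]
  have hcont₁ : ContinuousOn γ (Icc 0 t) := h.cont.mono (Icc_subset_Icc_right ht.2)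
  have hcont₂ : ContinuousOn γ (Icc t 1) := h.cont.mono (Icc_subset_Icc_left ht.1)
  have hopen : ∀ {a b : ℝ}, ContinuousOn γ (Icc a b) → IsOpen (γ '' Icc a b)ᶜ := fun hγ =>
    (isCompact_Icc.image_of_continuousOn hγ).isClosed.isOpen_compl
  obtain ⟨ψ, hψ⟩ := exists_isLogVariation_ball hS hr
    (fun z hz => not_lt.1 fun hlt => hball (Metric.mem_ball.2 hlt) (hSK hz)) h0 h1
  obtain ⟨δ₁, hδ₁⟩ := exists_isLogVariation_curve ht.1 hcont₁
  obtain ⟨δ₂, hδ₂⟩ := exists_isLogVariation_curve ht.2 hcont₂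
  have hmem : ∀ p ∈ Metric.ball (γ t) r ∩ (γ '' Icc 0 t)ᶜ ∩ (γ '' Icc t 1)ᶜ,
      p ∈ Metric.ball (γ t) r \ γ '' Icc 0 1 := fun p hp =>
    ⟨hp.1.1, by rw [hhalves]; exact not_or_intro hp.1.2 hp.2⟩
  have hnotMem : ∀ p ∈ Metric.ball (γ t) r \ γ '' Icc 0 1, p ∉ K ∪ γ '' Icc 0 1 := fun p hp =>
    not_or_intro (hball hp.1) hp.2
  refine (hψ.hasLogOn_union hδ₁ hδ₂ Metric.isOpen_ball (hopen hcont₁) (hopen hcont₂)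
    (fun hmem => hball hmem (hSK h1)) fun p hp q hq => ?_).mono fun p hp => ?_
  · refine (hasLogOn_sub_div_sub_of_mem_component (hK.union h.isCompact_image.isClosed)
      (hnotMem p (hmem p hp)) ?_).mono ?_
    · rw [hsep p (hmem p hp) q (hmem q hq)]
      exact mem_connectedComponentIn (hnotMem q (hmem q hq))
    · rw [hhalves, union_assoc]
      exact union_subset_union_left _ hSK
  · rw [← inter_union_distrib_left, ← compl_inter]
    exact ⟨hp.1, fun hpt => hp.2 (h.image_Icc_inter_subset ht hpt)⟩

theorem exists_separated (h : IsEar K γ) (hK : IsClosed K) {S : Set ℂ} (hS : IsPreconnected S)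
    (hSK : S ⊆ K) (h0 : γ 0 ∈ S) (h1 : γ 1 ∈ S) {t : ℝ} (ht : t ∈ Ioo (0 : ℝ) 1) :
    ∃ p q, p ∉ K ∪ γ '' Icc 0 1 ∧ q ∉ K ∪ γ '' Icc 0 1 ∧
      p ∈ connectedComponentIn Kᶜ (γ t) ∧ q ∈ connectedComponentIn Kᶜ (γ t) ∧
      connectedComponentIn (K ∪ γ '' Icc 0 1)ᶜ p ≠ connectedComponentIn (K ∪ γ '' Icc 0 1)ᶜ q := by
  by_contra! hcon
  obtain ⟨r, hr, hball⟩ := Metric.isOpen_iff.1 hK.isOpen_compl (γ t) (h.avoid t ht)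
  have hcomp : Metric.ball (γ t) r ⊆ connectedComponentIn Kᶜ (γ t) :=
    (convex_ball _ r).isPreconnected.subset_connectedComponentIn (Metric.mem_ball_self hr) hball
  have hquot := h.hasLogOn_of_not_separated hK hS hSK h0 h1 (Ioo_subset_Icc_self ht) hr hball
    fun p hp q hq => hcon p q (not_or_intro (hball hp.1) hp.2) (not_or_intro (hball hq.1) hq.2)
      (hcomp hp.1) (hcomp hq.1)
  have hne : ∀ p ∈ Metric.ball (γ t) r, γ 0 - p ≠ 0 := fun p hp =>
    sub_ne_zero.2 fun e => hball hp (e ▸ h.zero_mem)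
  have hsub : HasLogOn (fun p => γ 0 - p) (Metric.ball (γ t) r \ {γ t}) :=
    (HasLogOn.of_convex (convex_ball _ r) Metric.isOpen_ball (by fun_prop) hne).mono sdiff_subset
  exact not_hasLogOn_sub_punctured_ball (γ t) hr <|
    (hquot.mul hsub).congr fun p hp => (div_mul_cancel₀ _ (hne p hp.1)).symm

end IsEar

end PlaneArcs

/-! ### Faces -/

section PlaneFaces

open Set

/-- The faces of a plane set `K`: the connected components of its complement. -/
def planeFaces (K : Set ℂ) : Set (Set ℂ) := connectedComponentIn Kᶜ '' Kᶜ

variable {K K' F : Set ℂ} {γ : ℝ → ℂ}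

theorem connectedComponentIn_mem_planeFaces {z : ℂ} (hz : z ∉ K) :
    connectedComponentIn Kᶜ z ∈ planeFaces K :=
  mem_image_of_mem _ hz

theorem eq_connectedComponentIn_of_mem_planeFaces (hF : F ∈ planeFaces K) {z : ℂ} (hz : z ∈ F) :
    F = connectedComponentIn Kᶜ z := by
  obtain ⟨p, -, rfl⟩ := hF
  exact connectedComponentIn_eq hz

theorem subset_compl_of_mem_planeFaces (hF : F ∈ planeFaces K) : F ⊆ Kᶜ := by
  obtain ⟨p, -, rfl⟩ := hF
  exact connectedComponentIn_subset _ _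

theorem nonempty_of_mem_planeFaces (hF : F ∈ planeFaces K) : F.Nonempty := by
  obtain ⟨p, hp, rfl⟩ := hF
  exact ⟨p, mem_connectedComponentIn hp⟩

theorem isPreconnected_of_mem_planeFaces (hF : F ∈ planeFaces K) : IsPreconnected F := by
  obtain ⟨p, -, rfl⟩ := hF
  exact isPreconnected_connectedComponentIn

theorem frontier_subset_of_mem_planeFaces (hK : IsClosed K) (hF : F ∈ planeFaces K) :
    frontier F ⊆ K := by
  obtain ⟨p, -, rfl⟩ := hF
  exact frontier_connectedComponentIn_compl_subset hK p

theorem mem_planeFaces_of_frontier_subset (hsub : K' ⊆ K)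
    (hF : F ∈ planeFaces K) (hfr : frontier F ⊆ K') : F ∈ planeFaces K' := by
  obtain ⟨p, hp⟩ := nonempty_of_mem_planeFaces hF
  have hFK' : F ⊆ K'ᶜ := (subset_compl_of_mem_planeFaces hF).trans (compl_subset_compl.2 hsub)
  have hpp : p ∈ connectedComponentIn K'ᶜ p := mem_connectedComponentIn (hFK' hp)
  refine ⟨p, hFK' hp, Subset.antisymm ?_
    ((isPreconnected_of_mem_planeFaces hF).subset_connectedComponentIn hp hFK')⟩
  by_contra hne
  obtain ⟨y, hy, hyF⟩ := not_subset.1 hne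
  have hcover : connectedComponentIn K'ᶜ p ⊆ interior F ∪ (closure F)ᶜ := fun z hz =>
    or_iff_not_imp_left.2 fun hzi hzc => connectedComponentIn_subset _ _ hz (hfr ⟨hzc, hzi⟩)
  obtain ⟨z, -, hz, hz'⟩ := isPreconnected_connectedComponentIn _ _ isOpen_interior
    isClosed_closure.isOpen_compl hcover
    ⟨p, hpp, (hcover hpp).resolve_right (not_not_intro (subset_closure hp))⟩
    ⟨y, hy, (hcover hy).resolve_left fun h => hyF (interior_subset h)⟩
  exact hz' (subset_closure (interior_subset hz))

theorem mem_planeFaces_union (hF : F ∈ planeFaces K) (hd : Disjoint F K') :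
    F ∈ planeFaces (K ∪ K') := by
  obtain ⟨p, hp⟩ := nonempty_of_mem_planeFaces hF
  have hFK : F ⊆ (K ∪ K')ᶜ := fun z hz =>
    not_or_intro (subset_compl_of_mem_planeFaces hF hz) (Set.disjoint_left.1 hd hz)
  refine ⟨p, hFK hp, Subset.antisymm ?_
    ((isPreconnected_of_mem_planeFaces hF).subset_connectedComponentIn hp hFK)⟩
  rw [eq_connectedComponentIn_of_mem_planeFaces hF hp]
  exact connectedComponentIn_mono _ (compl_subset_compl.2 subset_union_left)

namespace IsEar

theorem mem_connectedComponentIn_of_mem_Ioo (h : IsEar K γ) {s t : ℝ} (hs : s ∈ Ioo (0 : ℝ) 1)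
    (ht : t ∈ Ioo (0 : ℝ) 1) : γ s ∈ connectedComponentIn Kᶜ (γ t) := by
  refine (isPreconnected_Ioo.image _ (h.cont.mono Ioo_subset_Icc_self)).subset_connectedComponentIn
    (mem_image_of_mem _ ht) ?_ (mem_image_of_mem _ hs)
  rintro _ ⟨r, hr, rfl⟩
  exact h.avoid r hr

theorem disjoint_of_ne (h : IsEar K γ) {t : ℝ} (ht : t ∈ Ioo (0 : ℝ) 1) (hF : F ∈ planeFaces K)
    (hne : F ≠ connectedComponentIn Kᶜ (γ t)) : Disjoint F (γ '' Icc 0 1) := by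
  rw [Set.disjoint_left]
  rintro _ hz ⟨s, hs, rfl⟩
  have hzK := subset_compl_of_mem_planeFaces hF hz
  have hs' : s ∈ Ioo (0 : ℝ) 1 := by
    refine ⟨hs.1.lt_of_ne ?_, hs.2.lt_of_ne ?_⟩ <;> rintro rfl
    exacts [hzK h.zero_mem, hzK h.one_mem]
  exact hne ((eq_connectedComponentIn_of_mem_planeFaces hF hz).trans
    (connectedComponentIn_eq (h.mem_connectedComponentIn_of_mem_Ioo hs' ht)).symm)

theorem connectedComponentIn_eq_of_mem_new_face (h : IsEar K γ) {t : ℝ}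
    (ht : t ∈ Ioo (0 : ℝ) 1) (hF : F ∈ planeFaces (K ∪ γ '' Icc 0 1) \ planeFaces K) {z : ℂ}
    (hz : z ∈ F) : connectedComponentIn Kᶜ z = connectedComponentIn Kᶜ (γ t) := by
  by_contra hne
  have hzK : z ∉ K := fun hm => subset_compl_of_mem_planeFaces hF.1 hz (Or.inl hm)
  have hU := connectedComponentIn_mem_planeFaces hzK
  have hU' := mem_planeFaces_union hU (h.disjoint_of_ne ht hU hne)
  rw [eq_connectedComponentIn_of_mem_planeFaces hU' (mem_connectedComponentIn hzK),
    ← eq_connectedComponentIn_of_mem_planeFaces hF.1 hz] at hU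
  exact hF.2 hU

theorem encard_planeFaces_sdiff_le (h : IsEar K γ) (hK : IsCompact K) :
    (planeFaces (K ∪ γ '' Icc 0 1) \ planeFaces K).encard ≤ 2 := by
  by_contra! hlt
  obtain ⟨T, hT, hcard⟩ := exists_subset_encard_eq (Order.add_one_le_of_lt hlt)
  obtain ⟨A, B, C, hAB, hAC, hBC, rfl⟩ := encard_eq_three.1 (hcard.trans (by norm_num))
  have hA := hT (show A ∈ _ by simp)
  have hB := hT (show B ∈ _ by simp)
  have hC := hT (show C ∈ _ by simp)
  obtain ⟨p, hp⟩ := nonempty_of_mem_planeFaces hA.1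
  obtain ⟨q, hq⟩ := nonempty_of_mem_planeFaces hB.1
  obtain ⟨r, hr⟩ := nonempty_of_mem_planeFaces hC.1
  have ht : (1 / 2 : ℝ) ∈ Ioo (0 : ℝ) 1 := by norm_num
  have hp' := h.connectedComponentIn_eq_of_mem_new_face ht hA hp
  have hq' := h.connectedComponentIn_eq_of_mem_new_face ht hB hq
  have hr' := h.connectedComponentIn_eq_of_mem_new_face ht hC hr
  have hor := h.connectedComponentIn_compl_eq_or hK (subset_compl_of_mem_planeFaces hA.1 hp)
    (subset_compl_of_mem_planeFaces hB.1 hq) (subset_compl_of_mem_planeFaces hC.1 hr)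
    (hp'.trans hq'.symm) (hp'.trans hr'.symm)
  rw [← eq_connectedComponentIn_of_mem_planeFaces hA.1 hp,
    ← eq_connectedComponentIn_of_mem_planeFaces hB.1 hq,
    ← eq_connectedComponentIn_of_mem_planeFaces hC.1 hr] at hor
  tauto

theorem finite_planeFaces (h : IsEar K γ) (hK : IsCompact K) (hf : (planeFaces K).Finite) :
    (planeFaces (K ∪ γ '' Icc 0 1)).Finite := by
  have hnew : (planeFaces (K ∪ γ '' Icc 0 1) \ planeFaces K).Finite :=
    finite_of_encard_le_coe (k := 2) (h.encard_planeFaces_sdiff_le hK)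
  exact (hnew.union hf).subset (by rw [sdiff_union_self]; exact subset_union_left)

theorem ncard_planeFaces_add_one_le (h : IsEar K γ) (hK : IsCompact K)
    (hf : (planeFaces K).Finite) {S : Set ℂ} (hS : IsPreconnected S)
    (hSK : S ⊆ K) (h0 : γ 0 ∈ S) (h1 : γ 1 ∈ S) :
    (planeFaces K).ncard + 1 ≤ (planeFaces (K ∪ γ '' Icc 0 1)).ncard := by
  have ht : (1 / 2 : ℝ) ∈ Ioo (0 : ℝ) 1 := by norm_num
  obtain ⟨p, q, hp, hq, hpF, hqF, hne⟩ := h.exists_separated hK.isClosed hS hSK h0 h1 ht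
  set F₀ := connectedComponentIn Kᶜ (γ (1 / 2))
  have hF₀ : F₀ ∈ planeFaces K := connectedComponentIn_mem_planeFaces (h.avoid _ ht)
  have hnew : ∀ z ∉ K ∪ γ '' Icc 0 1, z ∈ F₀ →
      connectedComponentIn (K ∪ γ '' Icc 0 1)ᶜ z ∉ planeFaces K \ {F₀} := by
    rintro z hz hzF ⟨hm, hm'⟩
    exact hm' ((eq_connectedComponentIn_of_mem_planeFaces hm (mem_connectedComponentIn hz)).trans
      (connectedComponentIn_eq hzF).symm)
  have hsub : insert (connectedComponentIn (K ∪ γ '' Icc 0 1)ᶜ p)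
      (insert (connectedComponentIn (K ∪ γ '' Icc 0 1)ᶜ q) (planeFaces K \ {F₀})) ⊆
      planeFaces (K ∪ γ '' Icc 0 1) :=
    insert_subset (connectedComponentIn_mem_planeFaces hp) <|
      insert_subset (connectedComponentIn_mem_planeFaces hq) fun F hF =>
        mem_planeFaces_union hF.1 (h.disjoint_of_ne ht hF.1 hF.2)
  have hcard := ncard_le_ncard hsub (h.finite_planeFaces hK hf)
  rw [ncard_insert_of_notMem (by rintro (hm | hm); exacts [hne hm, hnew p hp hpF hm])
      ((hf.subset sdiff_subset).insert _),
    ncard_insert_of_notMem (hnew q hq hqF) (hf.subset sdiff_subset)] at hcard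
  have := ncard_sdiff_singleton_add_one hF₀ hf
  omega

end IsEar

end PlaneFaces

/-! ### Drawings of graphs -/

theorem isPlanar_of_le {V : Type*} {G H : SimpleGraph V} (hG : G.IsPlanar) (hle : H ≤ G) :
    H.IsPlanar := by
  obtain ⟨P⟩ := hG
  have hmem : ∀ e : H.edgeSet, (e : Sym2 V) ∈ G.edgeSet := fun e => edgeSet_mono hle e.2
  exact ⟨{
    pos := P.pos
    inj := P.inj
    arc := fun e => P.arc ⟨e, hmem e⟩
    arc_cont := fun _ => P.arc_cont _
    arc_inj := fun _ => P.arc_inj _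
    arc_ends := fun e => P.arc_ends ⟨e, hmem e⟩
    arc_avoid := fun _ => P.arc_avoid _
    arc_disjoint := fun _ _ hne =>
      P.arc_disjoint _ _ fun h => hne (Subtype.ext (by simpa using h)) }⟩

namespace PlaneEmbedding

open Set

variable {V : Type*} {G : SimpleGraph V}

variable (P : PlaneEmbedding G)

/-- The position of a vertex as a complex number. -/
noncomputable def pt (v : V) : ℂ := Complex.equivRealProdCLM.symm (P.pos v)

open Classical in
/-- The arc of an edge as a curve in the complex plane; the junk value `0` makes it total in `e`. -/
noncomputable def curve (e : Sym2 V) (t : ℝ) : ℂ :=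
  if h : e ∈ G.edgeSet then Complex.equivRealProdCLM.symm (P.arc ⟨e, h⟩ t) else 0

/-- The points of a set of vertices together with the arcs of a set of edges. The vertices are
independent of the edges, so that parts of a drawing are drawings too. -/
def drawing (X : Set V) (S : Set (Sym2 V)) : Set ℂ :=
  P.pt '' X ∪ ⋃ e ∈ S, P.curve e '' Icc 0 1

theorem curve_eq {e : Sym2 V} (he : e ∈ G.edgeSet) :
    P.curve e = fun t => Complex.equivRealProdCLM.symm (P.arc ⟨e, he⟩ t) := by
  ext t
  simp [curve, he]

theorem pt_injective : Function.Injective P.pt := fun _ _ h =>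
  P.inj (Complex.equivRealProdCLM.symm.injective h)

variable {e f : Sym2 V} {S T : Set (Sym2 V)} {X : Set V}

theorem continuousOn_curve (he : e ∈ G.edgeSet) : ContinuousOn (P.curve e) (Icc 0 1) := by
  rw [P.curve_eq he]
  exact Complex.equivRealProdCLM.symm.continuous.comp_continuousOn (P.arc_cont _)

theorem injOn_curve (he : e ∈ G.edgeSet) : InjOn (P.curve e) (Icc 0 1) := by
  rw [P.curve_eq he]
  exact fun s hs t ht h => P.arc_inj _ hs ht (Complex.equivRealProdCLM.symm.injective h)

theorem exists_curve_endpoints (he : e ∈ G.edgeSet) :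
    ∃ u v, e = s(u, v) ∧ P.curve e 0 = P.pt u ∧ P.curve e 1 = P.pt v := by
  obtain ⟨u, v, h, h0, h1⟩ := P.arc_ends ⟨e, he⟩
  exact ⟨u, v, h, by rw [P.curve_eq he, pt, ← h0], by rw [P.curve_eq he, pt, ← h1]⟩

theorem curve_notMem_range_pt (he : e ∈ G.edgeSet) {t : ℝ} (ht : t ∈ Ioo (0 : ℝ) 1) :
    P.curve e t ∉ range P.pt := by
  rintro ⟨v, hv⟩
  rw [P.curve_eq he] at hv
  exact P.arc_avoid ⟨e, he⟩ t ht ⟨v, Complex.equivRealProdCLM.symm.injective hv⟩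

theorem curve_ne_curve (he : e ∈ G.edgeSet) (hf : f ∈ G.edgeSet) (hne : e ≠ f) {s t : ℝ}
    (hs : s ∈ Ioo (0 : ℝ) 1) (ht : t ∈ Ioo (0 : ℝ) 1) : P.curve e s ≠ P.curve f t := by
  rw [P.curve_eq he, P.curve_eq hf]
  exact fun h => P.arc_disjoint ⟨e, he⟩ ⟨f, hf⟩ (fun h => hne (congrArg Subtype.val h)) s hs t ht
    (Complex.equivRealProdCLM.symm.injective h)

theorem eq_pt_or_eq_curve_of_mem_curve (he : e ∈ G.edgeSet) {z : ℂ}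
    (hz : z ∈ P.curve e '' Icc 0 1) :
    (∃ w ∈ e, z = P.pt w) ∨ ∃ t ∈ Ioo (0 : ℝ) 1, z = P.curve e t := by
  obtain ⟨t, ht, rfl⟩ := hz
  obtain ⟨u, v, rfl, h0, h1⟩ := P.exists_curve_endpoints he
  rcases eq_or_lt_of_le ht.1 with rfl | ht0
  · exact Or.inl ⟨u, by simp, h0⟩
  rcases eq_or_lt_of_le ht.2 with rfl | ht1
  · exact Or.inl ⟨v, by simp, h1⟩
  · exact Or.inr ⟨t, ⟨ht0, ht1⟩, rfl⟩

theorem pt_mem_curve_iff (he : e ∈ G.edgeSet) {w : V} :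
    P.pt w ∈ P.curve e '' Icc 0 1 ↔ w ∈ e := by
  constructor
  · intro hw
    rcases P.eq_pt_or_eq_curve_of_mem_curve he hw with ⟨w', hw', h⟩ | ⟨t, ht, h⟩
    · rwa [P.pt_injective h]
    · exact absurd ⟨w, h⟩ (P.curve_notMem_range_pt he ht)
  · intro hw
    obtain ⟨u, v, rfl, h0, h1⟩ := P.exists_curve_endpoints he
    rcases Sym2.mem_iff.1 hw with rfl | rfl
    exacts [⟨0, by simp, h0⟩, ⟨1, by simp, h1⟩]

theorem exists_eq_pt_of_mem_curve_of_mem_curve (he : e ∈ G.edgeSet) (hf : f ∈ G.edgeSet)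
    (hne : e ≠ f) {z : ℂ} (hz : z ∈ P.curve e '' Icc 0 1) (hz' : z ∈ P.curve f '' Icc 0 1) :
    ∃ w, w ∈ e ∧ w ∈ f ∧ z = P.pt w := by
  rcases P.eq_pt_or_eq_curve_of_mem_curve he hz with ⟨w, hw, rfl⟩ | ⟨t, ht, rfl⟩
  · exact ⟨w, hw, (P.pt_mem_curve_iff hf).1 hz', rfl⟩
  rcases P.eq_pt_or_eq_curve_of_mem_curve hf hz' with ⟨w, -, h⟩ | ⟨s, hs, h⟩
  · exact absurd ⟨w, h.symm⟩ (P.curve_notMem_range_pt he ht)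
  · exact absurd h (P.curve_ne_curve he hf hne ht hs)

theorem drawing_insert : P.drawing X (insert e S) = P.drawing X S ∪ P.curve e '' Icc 0 1 := by
  rw [drawing, drawing, biUnion_insert, union_assoc, union_comm (P.curve e '' _)]

theorem drawing_univ_empty : P.drawing univ ∅ = range P.pt := by simp [drawing]

theorem pt_mem_drawing {v : V} (hv : v ∈ X) : P.pt v ∈ P.drawing X S := Or.inl ⟨v, hv, rfl⟩

theorem drawing_mono {Y : Set V} (hXY : X ⊆ Y) (hST : S ⊆ T) :
    P.drawing X S ⊆ P.drawing Y T :=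
  union_subset_union (image_mono hXY) (biUnion_subset_biUnion_left hST)

theorem curve_subset_drawing (he : e ∈ S) : P.curve e '' Icc 0 1 ⊆ P.drawing X S :=
  (subset_biUnion_of_mem (u := fun e => P.curve e '' Icc 0 1) he).trans subset_union_right

theorem isEar (hS : S ⊆ G.edgeSet) (he : e ∈ G.edgeSet) (heS : e ∉ S) :
    IsEar (P.drawing univ S) (P.curve e) := by
  obtain ⟨u, v, -, h0, h1⟩ := P.exists_curve_endpoints he
  refine ⟨P.continuousOn_curve he, P.injOn_curve he, h0 ▸ P.pt_mem_drawing (mem_univ u),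
    h1 ▸ P.pt_mem_drawing (mem_univ v), ?_⟩
  rintro t ht (⟨w, -, hm⟩ | hm)
  · exact P.curve_notMem_range_pt he ht ⟨w, hm⟩
  · obtain ⟨f, hf, hm⟩ := mem_iUnion₂.1 hm
    obtain ⟨w, -, -, hw⟩ := P.exists_eq_pt_of_mem_curve_of_mem_curve he (hS hf)
      (fun h => heS (h ▸ hf)) (mem_image_of_mem _ (Ioo_subset_Icc_self ht)) hm
    exact P.curve_notMem_range_pt he ht ⟨w, hw.symm⟩

theorem connectedComponentIn_drawing_eq_of_reachable (hS : S ⊆ G.edgeSet) {u v : V}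
    (h : (fromEdgeSet S).Reachable u v) :
    connectedComponentIn (P.drawing univ S) (P.pt u) =
      connectedComponentIn (P.drawing univ S) (P.pt v) := by
  obtain ⟨p⟩ := h
  induction p with
  | nil => rfl
  | @cons u v w huv _ ih =>
    rw [← ih]
    have he : s(u, v) ∈ S := huv.1
    have hpre : IsPreconnected (P.curve s(u, v) '' Icc 0 1) :=
      isPreconnected_Icc.image _ (P.continuousOn_curve (hS he))
    exact connectedComponentIn_eq <| hpre.subset_connectedComponentIn
      ((P.pt_mem_curve_iff (hS he)).2 (by simp)) (P.curve_subset_drawing he)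
      ((P.pt_mem_curve_iff (hS he)).2 (by simp))

theorem disjoint_drawing {Y : Set V} (hS : S ⊆ G.edgeSet) (hT : T ⊆ G.edgeSet)
    (hXY : Disjoint X Y) (hSX : ∀ e ∈ S, ∀ w ∈ e, w ∈ X) (hTY : ∀ e ∈ T, ∀ w ∈ e, w ∈ Y) :
    Disjoint (P.drawing X S) (P.drawing Y T) := by
  have hXY' : ∀ w ∈ X, w ∉ Y := fun _ hw => Set.disjoint_left.1 hXY hw
  rw [Set.disjoint_left]
  rintro z (⟨w, hw, rfl⟩ | hz) (⟨w', hw', h⟩ | hz')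
  · exact hXY' w hw (P.pt_injective h ▸ hw')
  · obtain ⟨f, hf, hz'⟩ := mem_iUnion₂.1 hz'
    exact hXY' w hw (hTY f hf w ((P.pt_mem_curve_iff (hT hf)).1 hz'))
  · obtain ⟨e, he, hz⟩ := mem_iUnion₂.1 hz
    exact hXY' w' (hSX e he w' ((P.pt_mem_curve_iff (hS he)).1 (h ▸ hz))) hw'
  · obtain ⟨e, he, hz⟩ := mem_iUnion₂.1 hz
    obtain ⟨f, hf, hz'⟩ := mem_iUnion₂.1 hz'
    have hne : e ≠ f := by
      rintro rfl
      induction e with | h a b =>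
      exact hXY' a (hSX _ he a (by simp)) (hTY _ hf a (by simp))
    obtain ⟨w, hw, hw', -⟩ :=
      P.exists_eq_pt_of_mem_curve_of_mem_curve (hS he) (hT hf) hne hz hz'
    exact hXY' w (hSX e he w hw) (hTY f hf w hw')

theorem drawing_univ_eq_union (hX : ∀ e ∈ S, ∀ a ∈ e, ∀ b ∈ e, a ∈ X → b ∈ X) :
    P.drawing univ S =
      P.drawing X {e ∈ S | ∀ w ∈ e, w ∈ X} ∪ P.drawing Xᶜ {e ∈ S | ∀ w ∈ e, w ∈ Xᶜ} := by
  refine Subset.antisymm ?_ (union_subset (P.drawing_mono (subset_univ _) (sep_subset _ _))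
    (P.drawing_mono (subset_univ _) (sep_subset _ _)))
  rintro z (⟨w, -, rfl⟩ | hz)
  · exact (em (w ∈ X)).imp P.pt_mem_drawing P.pt_mem_drawing
  · obtain ⟨e, he, hz⟩ := mem_iUnion₂.1 hz
    by_cases heX : ∀ w ∈ e, w ∈ X
    · exact Or.inl (P.curve_subset_drawing (S := {e ∈ S | ∀ w ∈ e, w ∈ X}) ⟨he, heX⟩ hz)
    · push Not at heX
      obtain ⟨a, ha, haX⟩ := heX
      exact Or.inr (P.curve_subset_drawing (S := {e ∈ S | ∀ w ∈ e, w ∈ Xᶜ})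
        ⟨he, fun b hb hbX => haX (hX e he b hb a ha hbX)⟩ hz)

variable [Finite V]

theorem isCompact_drawing (hS : S ⊆ G.edgeSet) : IsCompact (P.drawing X S) :=
  (X.toFinite.image _).isCompact.union (S.toFinite.isCompact_biUnion fun _ he =>
    isCompact_Icc.image_of_continuousOn (P.continuousOn_curve (hS he)))

theorem connectedComponentIn_compl_drawing_insert_eq_of_not_reachable (hS : S ⊆ G.edgeSet)
    (he : e ∈ G.edgeSet) (heS : e ∉ S)
    (hnr : ∀ u v, e = s(u, v) → ¬ (fromEdgeSet S).Reachable u v) {p q : ℂ}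
    (hp : p ∉ P.drawing univ (insert e S)) (hq : q ∉ P.drawing univ (insert e S))
    (hpq : connectedComponentIn (P.drawing univ S)ᶜ p =
      connectedComponentIn (P.drawing univ S)ᶜ q) :
    connectedComponentIn (P.drawing univ (insert e S))ᶜ p =
      connectedComponentIn (P.drawing univ (insert e S))ᶜ q := by
  obtain ⟨u, v, huv, h0, h1⟩ := P.exists_curve_endpoints he
  let R : Set V := {w | (fromEdgeSet S).Reachable u w}
  have hR : ∀ f ∈ S, ∀ a ∈ f, ∀ b ∈ f, a ∈ R → b ∈ R := by
    intro f hf a ha b hb haR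
    by_cases hab : a = b
    · rwa [← hab]
    · rw [(Sym2.mem_and_mem_iff hab).1 ⟨ha, hb⟩] at hf
      exact haR.trans (Adj.reachable ⟨hf, hab⟩)
  have hear := P.isEar hS he heS
  have hsep : ∀ Q : Sym2 V → Prop, {f ∈ S | Q f} ⊆ G.edgeSet := fun _ _ hf => hS hf.1
  rw [P.drawing_insert] at hp hq ⊢
  rw [P.drawing_univ_eq_union hR] at hear hpq hp hq ⊢
  exact hear.connectedComponentIn_compl_eq_of_disjoint (P.isCompact_drawing (hsep _))
    (P.isCompact_drawing (hsep _))
    (P.disjoint_drawing (hsep _) (hsep _) disjoint_compl_right (fun _ h => h.2) fun _ h => h.2)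
    (h0 ▸ P.pt_mem_drawing (Reachable.refl u)) (h1 ▸ P.pt_mem_drawing (hnr u v huv)) hp hq hpq

end PlaneEmbedding

/-! ### Euler's inequality and the density of planar graphs -/

section EdgeSets

variable {V : Type*} {G H : SimpleGraph V} {S : Set (Sym2 V)}

theorem fromEdgeSet_insert_deleteEdges {e : Sym2 V} (heS : e ∉ S) :
    (fromEdgeSet (insert e S)).deleteEdges {e} = fromEdgeSet S := by
  rw [deleteEdges, ← fromEdgeSet_sdiff, Set.insert_sdiff_of_mem _ (Set.mem_singleton e),
    Set.sdiff_singleton_eq_self heS]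

theorem edgeSet_fromEdgeSet_of_subset (hS : S ⊆ G.edgeSet) : (fromEdgeSet S).edgeSet = S := by
  rw [edgeSet_fromEdgeSet]
  exact sdiff_eq_left.2 <| Set.disjoint_left.2 fun e he => G.not_isDiag_of_mem_edgeSet (hS he)

theorem ncard_edgeSet_add_one_le_of_isAcyclic (hH : H.IsAcyclic) {W : Finset V}
    (hW : W.Nonempty) (hsupp : ∀ u v, H.Adj u v → u ∈ W) : H.edgeSet.ncard + 1 ≤ W.card := by
  have : Nonempty W := hW.to_subtype
  obtain ⟨T, hle, hT⟩ := exists_maximal_isAcyclic_of_le_isAcyclic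
    (G := (⊤ : SimpleGraph W)) le_top (hH.induce W)
  have hTree : T.IsTree := isTree_iff_maximal_isAcyclic.2
    ⟨inferInstance, hT.1.2, fun T' hT' h => hT.2 ⟨le_top, hT'⟩ h⟩
  have hcard := (isTree_iff_connected_and_card.1 hTree).2
  rw [Nat.card_coe_set_eq, Nat.card_eq_fintype_card (α := W), Fintype.card_coe] at hcard
  have hsub : H.edgeSet ⊆ Sym2.map Subtype.val '' T.edgeSet := by
    intro e
    induction e with | h u v =>
    intro he
    exact ⟨s(⟨u, hsupp u v he⟩, ⟨v, hsupp v u he.symm⟩), hle he, rfl⟩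
  have := (Set.ncard_le_ncard hsub (Set.toFinite _)).trans (Set.ncard_image_le (Set.toFinite _))
  omega

theorem le_ncard_edgeSet_of_not_isAcyclic [Finite V] {g : ℕ} (hg : (g : ℕ∞) ≤ H.egirth)
    (hac : ¬ H.IsAcyclic) : g ≤ H.edgeSet.ncard := by
  classical
  rw [IsAcyclic] at hac
  push Not at hac
  obtain ⟨v, c, hc⟩ := hac
  have hlen : g ≤ c.length := by exact_mod_cast hg.trans (egirth_le_length hc)
  refine hlen.trans ?_
  rw [← c.length_edges, ← List.toFinset_card_of_nodup hc.edges_nodup, ← Set.ncard_coe_finset]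
  exact Set.ncard_le_ncard (fun e he => c.edges_subset_edgeSet (by simpa using he)) (Set.toFinite _)

end EdgeSets

namespace PlaneEmbedding

open Set

variable {V : Type*} {G : SimpleGraph V} (P : PlaneEmbedding G) {S : Set (Sym2 V)}

/-- The edges bordering the face `F` of a drawing: those without which `F` is not a face. -/
def boundary (S : Set (Sym2 V)) (F : Set ℂ) : Set (Sym2 V) :=
  {e ∈ S | F ∉ planeFaces (P.drawing univ (S \ {e}))}

theorem boundary_subset (F : Set ℂ) : P.boundary S F ⊆ S := sep_subset _ _

variable [Finite V]

theorem connectedComponentIn_compl_drawing_eq_of_isAcyclic (hS : S ⊆ G.edgeSet)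
    (hac : (fromEdgeSet S).IsAcyclic) {p q : ℂ} (hp : p ∉ P.drawing univ S)
    (hq : q ∉ P.drawing univ S) :
    connectedComponentIn (P.drawing univ S)ᶜ p = connectedComponentIn (P.drawing univ S)ᶜ q := by
  induction S, Set.toFinite S using Set.Finite.induction_on with
  | empty =>
    have hpre : IsPreconnected (range P.pt)ᶜ :=
      ((finite_range P.pt).countable.isPathConnected_compl_of_one_lt_rank (by
        rw [Complex.rank_real_complex]; norm_num)).isConnected.isPreconnected
    rw [drawing_univ_empty] at *
    exact connectedComponentIn_eq (hpre.subset_connectedComponentIn hp Subset.rfl hq)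
  | @insert e S heS _ ih =>
    have he : e ∈ G.edgeSet := hS (mem_insert _ _)
    have hSG : S ⊆ G.edgeSet := (subset_insert _ _).trans hS
    have hsub : P.drawing univ S ⊆ P.drawing univ (insert e S) :=
      P.drawing_mono Subset.rfl (subset_insert _ _)
    refine P.connectedComponentIn_compl_drawing_insert_eq_of_not_reachable hSG he heS ?_ hp hq
      (ih hSG (hac.anti (fromEdgeSet_mono (subset_insert _ _))) (fun h => hp (hsub h))
        fun h => hq (hsub h))
    rintro u v rfl
    have hbridge := isAcyclic_iff_forall_adj_isBridge.1 hac (v := u) (w := v)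
      ⟨mem_insert _ _, he.ne⟩
    rwa [isBridge_iff, fromEdgeSet_insert_deleteEdges heS] at hbridge

theorem finite_planeFaces (hS : S ⊆ G.edgeSet) : (planeFaces (P.drawing univ S)).Finite := by
  induction S, Set.toFinite S using Set.Finite.induction_on with
  | empty =>
    refine Set.Subsingleton.finite ?_
    rintro _ ⟨p, hp, rfl⟩ _ ⟨q, hq, rfl⟩
    exact P.connectedComponentIn_compl_drawing_eq_of_isAcyclic hS (by simp) hp hq
  | @insert e S heS _ ih =>
    have hSG : S ⊆ G.edgeSet := (subset_insert _ _).trans hS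
    rw [P.drawing_insert]
    exact (P.isEar hSG (hS (mem_insert _ _)) heS).finite_planeFaces (P.isCompact_drawing hSG)
      (ih hSG)

theorem one_le_ncard_planeFaces (hS : S ⊆ G.edgeSet) :
    1 ≤ (planeFaces (P.drawing univ S)).ncard := by
  obtain ⟨z, hz⟩ := nonempty_compl.2 (P.isCompact_drawing (X := univ) hS).ne_univ
  exact (Set.ncard_pos (P.finite_planeFaces hS)).2 ⟨_, connectedComponentIn_mem_planeFaces hz⟩

theorem exists_ncard_planeFaces_add_one_le (hS : S ⊆ G.edgeSet)
    (hac : ¬ (fromEdgeSet S).IsAcyclic) :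
    ∃ e ∈ S, (planeFaces (P.drawing univ (S \ {e}))).ncard + 1 ≤
      (planeFaces (P.drawing univ S)).ncard := by
  rw [isAcyclic_iff_forall_adj_isBridge] at hac
  push Not at hac
  obtain ⟨u, v, huv, hbridge⟩ := hac
  have he : s(u, v) ∈ S := huv.1
  have hS' : S \ {s(u, v)} ⊆ G.edgeSet := sdiff_subset.trans hS
  have heS' : s(u, v) ∉ S \ {s(u, v)} := fun h => h.2 rfl
  have hins : insert s(u, v) (S \ {s(u, v)}) = S := by
    rw [insert_sdiff_singleton, insert_eq_of_mem he]
  rw [isBridge_iff, not_not, ← hins, fromEdgeSet_insert_deleteEdges heS'] at hbridge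
  have hmem : ∀ w ∈ s(u, v), P.pt w ∈
      connectedComponentIn (P.drawing univ (S \ {s(u, v)})) (P.pt u) := by
    intro w hw
    rcases Sym2.mem_iff.1 hw with rfl | rfl
    · exact mem_connectedComponentIn (P.pt_mem_drawing (mem_univ _))
    · rw [P.connectedComponentIn_drawing_eq_of_reachable hS' hbridge]
      exact mem_connectedComponentIn (P.pt_mem_drawing (mem_univ _))
  obtain ⟨a, b, hab, h0, h1⟩ := P.exists_curve_endpoints (hS he)
  have hcount := (P.isEar hS' (hS he) heS').ncard_planeFaces_add_one_le (P.isCompact_drawing hS')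
    (P.finite_planeFaces hS') isPreconnected_connectedComponentIn (connectedComponentIn_subset _ _)
    (h0 ▸ hmem a (by simp [hab])) (h1 ▸ hmem b (by simp [hab]))
  rw [← P.drawing_insert, hins] at hcount
  exact ⟨s(u, v), he, hcount⟩

theorem two_le_ncard_planeFaces (hS : S ⊆ G.edgeSet) (hac : ¬ (fromEdgeSet S).IsAcyclic) :
    2 ≤ (planeFaces (P.drawing univ S)).ncard := by
  obtain ⟨e, -, h⟩ := P.exists_ncard_planeFaces_add_one_le hS hac
  have := P.one_le_ncard_planeFaces (sdiff_subset.trans hS : S \ {e} ⊆ _)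
  omega

/-- The inequality `e + 1 ≤ f + n` between the numbers of edges, faces and vertices: of Euler's
formula, this direction also holds for disconnected graphs. -/
theorem ncard_add_one_le_ncard_planeFaces_add_card (hS : S ⊆ G.edgeSet) {W : Finset V}
    (hW : W.Nonempty) (hsupp : ∀ e ∈ S, ∀ u ∈ e, u ∈ W) :
    S.ncard + 1 ≤ (planeFaces (P.drawing univ S)).ncard + W.card := by
  induction hn : S.ncard generalizing S with
  | zero =>
    have := P.one_le_ncard_planeFaces hS
    omega
  | succ n ih =>
    by_cases hac : (fromEdgeSet S).IsAcyclic
    · have htree := ncard_edgeSet_add_one_le_of_isAcyclic hac hW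
        (fun u v h => hsupp _ ((fromEdgeSet_adj S).1 h).1 u (by simp))
      rw [edgeSet_fromEdgeSet_of_subset hS] at htree
      omega
    · obtain ⟨e, he, h⟩ := P.exists_ncard_planeFaces_add_one_le hS hac
      have hcard := Set.ncard_sdiff_singleton_add_one he
      have := ih (S := S \ {e}) (sdiff_subset.trans hS) (fun f hf => hsupp f hf.1) (by omega)
      omega

theorem mem_planeFaces_boundary (hS : S ⊆ G.edgeSet) {F : Set ℂ}
    (hF : F ∈ planeFaces (P.drawing univ S)) :
    F ∈ planeFaces (P.drawing univ (P.boundary S F)) := by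
  refine mem_planeFaces_of_frontier_subset (P.drawing_mono Subset.rfl (P.boundary_subset F)) hF
    fun z hz => ?_
  rcases frontier_subset_of_mem_planeFaces (P.isCompact_drawing hS).isClosed hF hz with h | h
  · exact Or.inl h
  obtain ⟨f, hf, hzf⟩ := mem_iUnion₂.1 h
  by_cases hfB : F ∈ planeFaces (P.drawing univ (S \ {f}))
  · have hS' : S \ {f} ⊆ G.edgeSet := sdiff_subset.trans hS
    rcases frontier_subset_of_mem_planeFaces (P.isCompact_drawing hS').isClosed hfB hz with h | h
    · exact Or.inl h
    · obtain ⟨f', hf', hzf'⟩ := mem_iUnion₂.1 h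
      obtain ⟨w, -, -, rfl⟩ := P.exists_eq_pt_of_mem_curve_of_mem_curve (hS hf) (hS hf'.1)
        (Ne.symm hf'.2) hzf hzf'
      exact P.pt_mem_drawing (mem_univ w)
  · exact P.curve_subset_drawing (S := P.boundary S F) ⟨hf, hfB⟩ hzf

theorem not_isAcyclic_boundary (hS : S ⊆ G.edgeSet) (hac : ¬ (fromEdgeSet S).IsAcyclic)
    {F : Set ℂ} (hF : F ∈ planeFaces (P.drawing univ S)) :
    ¬ (fromEdgeSet (P.boundary S F)).IsAcyclic := by
  intro hacB
  have hsub : ∀ z ∉ P.drawing univ S, z ∉ P.drawing univ (P.boundary S F) := fun z hz hzB =>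
    hz (P.drawing_mono Subset.rfl (P.boundary_subset F) hzB)
  have hFB := P.mem_planeFaces_boundary hS hF
  obtain ⟨p, hp⟩ := nonempty_of_mem_planeFaces hFB
  have hone : planeFaces (P.drawing univ S) ⊆ {F} := by
    intro F' hF'
    obtain ⟨q, hq⟩ := nonempty_of_mem_planeFaces hF'
    have hqB := hsub q (subset_compl_of_mem_planeFaces hF' hq)
    have hqF : q ∈ F := by
      rw [eq_connectedComponentIn_of_mem_planeFaces hFB hp,
        P.connectedComponentIn_compl_drawing_eq_of_isAcyclic ((P.boundary_subset F).trans hS) hacB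
          (subset_compl_of_mem_planeFaces hFB hp) hqB]
      exact mem_connectedComponentIn hqB
    rw [mem_singleton_iff, eq_connectedComponentIn_of_mem_planeFaces hF hqF,
      eq_connectedComponentIn_of_mem_planeFaces hF' hq]
  have htwo := P.two_le_ncard_planeFaces hS hac
  have := Set.ncard_le_ncard hone
  rw [Set.ncard_singleton] at this
  omega

theorem le_ncard_boundary (hS : S ⊆ G.edgeSet) {g : ℕ} (hg : (g : ℕ∞) ≤ (fromEdgeSet S).egirth)
    (hac : ¬ (fromEdgeSet S).IsAcyclic) {F : Set ℂ} (hF : F ∈ planeFaces (P.drawing univ S)) :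
    g ≤ (P.boundary S F).ncard := by
  rw [← edgeSet_fromEdgeSet_of_subset ((P.boundary_subset F).trans hS)]
  exact le_ncard_edgeSet_of_not_isAcyclic
    (hg.trans (egirth_anti (fromEdgeSet_mono (P.boundary_subset F))))
    (P.not_isAcyclic_boundary hS hac hF)

theorem encard_setOf_mem_boundary_le (hS : S ⊆ G.edgeSet) {e : Sym2 V} (he : e ∈ S) :
    {F ∈ planeFaces (P.drawing univ S) | e ∈ P.boundary S F}.encard ≤ 2 := by
  have hS' : S \ {e} ⊆ G.edgeSet := sdiff_subset.trans hS
  have hnew := (P.isEar hS' (hS he) fun h => h.2 rfl).encard_planeFaces_sdiff_le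
    (P.isCompact_drawing hS')
  rw [← P.drawing_insert, insert_sdiff_singleton, insert_eq_of_mem he] at hnew
  refine (encard_le_encard ?_).trans hnew
  exact fun F hF => ⟨hF.1, hF.2.2⟩

theorem mul_ncard_planeFaces_le (hS : S ⊆ G.edgeSet) {g : ℕ}
    (hg : (g : ℕ∞) ≤ (fromEdgeSet S).egirth) (hac : ¬ (fromEdgeSet S).IsAcyclic) :
    g * (planeFaces (P.drawing univ S)).ncard ≤ 2 * S.ncard := by
  classical
  have hfin := P.finite_planeFaces hS
  have hSfin := S.toFinite
  rw [Set.ncard_eq_toFinset_card _ hfin, Set.ncard_eq_toFinset_card _ hSfin, mul_comm g,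
    mul_comm 2]
  refine Finset.card_mul_le_card_mul (fun F e => e ∈ P.boundary S F)
    (fun F hF => ?_) (fun e he => ?_)
  · refine (P.le_ncard_boundary hS hg hac (hfin.mem_toFinset.1 hF)).trans (le_of_eq ?_)
    rw [← Set.ncard_coe_finset]
    congr 1
    ext e
    simpa [Finset.bipartiteAbove] using fun h => P.boundary_subset F h
  · have := P.encard_setOf_mem_boundary_le hS (hSfin.mem_toFinset.1 he)
    rw [← Nat.cast_le (α := ℕ∞), ← Set.encard_coe_eq_coe_finsetCard]
    simpa [Finset.bipartiteBelow] using this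

end PlaneEmbedding

section Density

variable {V : Type*} {H : SimpleGraph V}

theorem mul_ncard_edgeSet_add_one_le_of_isPlanar [Finite V] (hH : H.IsPlanar) {g : ℕ}
    (hg : (g : ℕ∞) ≤ H.egirth) {W : Finset V} (hW : W.Nonempty)
    (hsupp : ∀ u v, H.Adj u v → u ∈ W) :
    g * (H.edgeSet.ncard + 1) ≤ g * W.card + 2 * H.edgeSet.ncard := by
  obtain ⟨P⟩ := hH
  by_cases hac : H.IsAcyclic
  · have := Nat.mul_le_mul_left g (ncard_edgeSet_add_one_le_of_isAcyclic hac hW hsupp)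
    omega
  · have hfaces := P.mul_ncard_planeFaces_le Set.Subset.rfl (g := g)
      (by rwa [fromEdgeSet_edgeSet]) (by rwa [fromEdgeSet_edgeSet])
    have heuler := Nat.mul_le_mul_left g <|
      P.ncard_add_one_le_ncard_planeFaces_add_card Set.Subset.rfl hW fun e he u hu => by
        obtain ⟨v, rfl⟩ := Sym2.mem_iff_exists.1 hu
        exact hsupp u v he
    rw [mul_add g (planeFaces _).ncard] at heuler
    omega

theorem add_one_le_egirth_between_of_odd {s t : Set V} (hst : Disjoint s t) {g : ℕ}
    (hodd : Odd g) (hg : (g : ℕ∞) ≤ (H.between s t).egirth) :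
    ((g + 1 : ℕ) : ℕ∞) ≤ (H.between s t).egirth := by
  rw [le_egirth] at hg ⊢
  intro a c hc
  have hle : g ≤ c.length := by exact_mod_cast hg a c hc
  have heven : Even c.length := two_colorable_iff_forall_loop_even.1
    (IsBipartiteWith.isBipartite (between_isBipartiteWith hst)) a c
  have hne : g ≠ c.length := by
    rintro rfl
    exact Nat.not_even_iff_odd.2 hodd heven
  exact_mod_cast lt_of_le_of_ne hle hne

theorem ncard_edgeSet_between_eq_sum_degree [Fintype V] [DecidableRel H.Adj] {M W : Finset V}
    (hMW : Disjoint M W) (hN : ∀ m ∈ M, ∀ y, H.Adj m y → y ∈ W) :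
    (H.between M W).edgeSet.ncard = ∑ m ∈ M, H.degree m := by
  classical
  have hb : (H.between M W).IsBipartiteWith M W :=
    between_isBipartiteWith (Finset.disjoint_coe.2 hMW)
  rw [← coe_edgeFinset, Set.ncard_coe_finset, ← isBipartiteWith_sum_degrees_eq_card_edges hb]
  refine Finset.sum_congr rfl fun m hm => ?_
  rw [← card_neighborFinset_eq_degree, ← card_neighborFinset_eq_degree]
  congr 1
  ext y
  have := hN m hm y
  simp only [mem_neighborFinset, between_adj, Finset.mem_coe]
  tauto

theorem mul_sum_degree_add_one_le_of_isPlanar [Fintype V] [DecidableRel H.Adj]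
    (hH : H.IsPlanar) {M W : Finset V} (hM : M.Nonempty) (hMW : Disjoint M W)
    (hN : ∀ m ∈ M, ∀ y, H.Adj m y → y ∈ W) {g : ℕ} (hg : (g : ℕ∞) ≤ (H.between M W).egirth) :
    g * (∑ m ∈ M, H.degree m + 1) ≤ g * (M.card + W.card) + 2 * ∑ m ∈ M, H.degree m := by
  classical
  have hdensity := mul_ncard_edgeSet_add_one_le_of_isPlanar (isPlanar_of_le hH between_le) hg
    (hM.mono Finset.subset_union_left) (W := M ∪ W) fun u v huv => by
      have := between_adj.1 huv
      simp only [Finset.mem_coe] at this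
      rw [Finset.mem_union]
      tauto
  rwa [ncard_edgeSet_between_eq_sum_degree hMW hN, Finset.card_union_of_disjoint hMW] at hdensity

end Density

/-! ### Light vertices and reducible configurations -/

section Configurations

variable {V : Type*} [Fintype V] (H : SimpleGraph V) [DecidableRel H.Adj] (D : ℕ)

/-- Light vertices: those of degree two whose neighbours have total degree at most `D`. They have
at most `D` vertices within distance two, so they can be coloured last. -/
def IsLight (v : V) : Prop := H.degree v = 2 ∧ ∑ y ∈ H.neighborFinset v, H.degree y ≤ D

instance : DecidablePred (IsLight H D) := fun v =>
  inferInstanceAs (Decidable (H.degree v = 2 ∧ ∑ y ∈ H.neighborFinset v, H.degree y ≤ D))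

/-- The degree of a vertex, where light vertices count as if they were leaves: the other neighbour
of an uncoloured light vertex imposes no constraint. -/
def reducedDegree (v : V) : ℕ := if IsLight H D v then 1 else H.degree v

/-- An eight-cycle `f` in which `f 2` and `f 6` are light and all vertices but `f 0` and `f 4` have
degree two. -/
structure IsLightOctagon (f : Fin 8 → V) : Prop where
  injective : Function.Injective f
  adj : ∀ i, H.Adj (f i) (f (i + 1))
  degree_odd : ∀ i, H.degree (f (2 * i + 1)) = 2
  isLight_two : IsLight H D (f 2)
  isLight_six : IsLight H D (f 6)

/-- The absence of the configurations that do not occur in an edge-minimal graph without a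
`1`-frugal colouring with `D + 1` colours. -/
structure AvoidsReducible : Prop where
  degree_ne_one : ∀ v, H.degree v ≠ 1
  lt_sum_reducedDegree : ∀ v u, IsLight H D v → H.Adj v u →
    D < ∑ y ∈ H.neighborFinset u, reducedDegree H D y
  not_isLightOctagon : ∀ f, ¬ IsLightOctagon H D f

/-- Big vertices: those of degree at least `D - 1`. -/
def bigVerts : Finset V := {v | D ≤ H.degree v + 1}

/-- Middle vertices: the light vertices both of whose neighbours have degree two. -/
def middleVerts : Finset V := {v | IsLight H D v ∧ ∀ u, H.Adj v u → H.degree u = 2}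

/-- The neighbours of the middle vertices. -/
def middleNeighbors : Finset V := {u | ∃ v ∈ middleVerts H D, H.Adj u v}

variable [DecidableEq V]

/-- The poor neighbours of `u`: its light neighbours whose other neighbour has degree two. -/
def poorNeighbors (u : V) : Finset V :=
  {v | H.Adj u v ∧ IsLight H D v ∧ ∃ w, H.Adj v w ∧ w ≠ u ∧ H.degree w = 2}

/-- Tight vertices: those of degree three with two poor neighbours. -/
def tightVerts : Finset V := {u | H.degree u = 3 ∧ (poorNeighbors H D u).card = 2}

/-- The vertices that are a poor neighbour of some tight vertex. -/
def tightNeighbors : Finset V := (tightVerts H D).biUnion (poorNeighbors H D)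

/-- The ends of the paths that start in a tight vertex and continue through a poor neighbour. -/
def tightEnds : Finset V := {w | H.degree w = 2 ∧ ∃ v ∈ tightNeighbors H D, H.Adj w v}

end Configurations

section Membership

variable {V : Type*} [Fintype V] {H : SimpleGraph V} [DecidableRel H.Adj] {D : ℕ} {u v w : V}

theorem mem_bigVerts : v ∈ bigVerts H D ↔ D ≤ H.degree v + 1 := by simp [bigVerts]

theorem mem_middleVerts :
    v ∈ middleVerts H D ↔ IsLight H D v ∧ ∀ u, H.Adj v u → H.degree u = 2 := by
  simp [middleVerts]

theorem mem_middleNeighbors : u ∈ middleNeighbors H D ↔ ∃ v ∈ middleVerts H D, H.Adj u v := by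
  simp [middleNeighbors]

theorem degree_of_mem_middleNeighbors (hu : u ∈ middleNeighbors H D) : H.degree u = 2 := by
  obtain ⟨v, hv, huv⟩ := mem_middleNeighbors.1 hu
  exact (mem_middleVerts.1 hv).2 u huv.symm

theorem IsLight.reducedDegree_eq (hv : IsLight H D v) : reducedDegree H D v = 1 := if_pos hv

theorem reducedDegree_le : reducedDegree H D v ≤ H.degree v := by
  rw [reducedDegree]
  split_ifs with h
  · rw [h.1]; omega
  · exact le_rfl

theorem not_isLight_of_two_lt_degree (hv : 2 < H.degree v) : ¬ IsLight H D v :=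
  fun h => hv.ne' h.1

variable [DecidableEq V]

theorem mem_poorNeighbors : v ∈ poorNeighbors H D u ↔
    H.Adj u v ∧ IsLight H D v ∧ ∃ w, H.Adj v w ∧ w ≠ u ∧ H.degree w = 2 := by
  simp [poorNeighbors]

theorem mem_tightVerts :
    u ∈ tightVerts H D ↔ H.degree u = 3 ∧ (poorNeighbors H D u).card = 2 := by
  simp [tightVerts]

theorem mem_tightNeighbors :
    v ∈ tightNeighbors H D ↔ ∃ u ∈ tightVerts H D, v ∈ poorNeighbors H D u :=
  Finset.mem_biUnion

theorem mem_tightEnds :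
    w ∈ tightEnds H D ↔ H.degree w = 2 ∧ ∃ v ∈ tightNeighbors H D, H.Adj w v := by
  simp [tightEnds]

theorem isLight_of_mem_tightNeighbors (hv : v ∈ tightNeighbors H D) : IsLight H D v := by
  obtain ⟨u, -, hvu⟩ := mem_tightNeighbors.1 hv
  exact (mem_poorNeighbors.1 hvu).2.1

theorem exists_adj_mem_tightEnds (hv : v ∈ tightNeighbors H D) :
    ∃ w ∈ tightEnds H D, H.Adj v w := by
  obtain ⟨u, -, hvu⟩ := mem_tightNeighbors.1 hv
  obtain ⟨-, -, w, hvw, -, hw⟩ := mem_poorNeighbors.1 hvu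
  exact ⟨w, mem_tightEnds.2 ⟨hw, v, hv, hvw.symm⟩, hvw⟩

end Membership

section DegreeTwo

variable {V : Type*} [Fintype V] {H : SimpleGraph V} [DecidableRel H.Adj] {u a b y : V}

theorem exists_adj_ne_of_degree_eq_two (hu : H.degree u = 2) (a : V) :
    ∃ b, H.Adj u b ∧ a ≠ b := by
  have hcard : 1 < (H.neighborFinset u).card := by
    rw [card_neighborFinset_eq_degree, hu]
    exact one_lt_two
  obtain ⟨b, hb, hne⟩ := Finset.exists_mem_ne hcard a
  exact ⟨b, (H.mem_neighborFinset _ _).1 hb, hne.symm⟩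

theorem neighborFinset_of_degree_eq_two [DecidableEq V] (hu : H.degree u = 2) (ha : H.Adj u a)
    (hb : H.Adj u b) (hab : a ≠ b) : H.neighborFinset u = {a, b} := by
  refine (Finset.eq_of_subset_of_card_le (fun y hy => ?_) ?_).symm
  · rw [Finset.mem_insert, Finset.mem_singleton] at hy
    rw [mem_neighborFinset]
    rcases hy with rfl | rfl <;> assumption
  · rw [card_neighborFinset_eq_degree, hu, Finset.card_pair hab]

theorem eq_or_eq_of_degree_eq_two (hu : H.degree u = 2) (ha : H.Adj u a) (hb : H.Adj u b)
    (hab : a ≠ b) (hy : H.Adj u y) : y = a ∨ y = b := by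
  classical
  rwa [← mem_neighborFinset, neighborFinset_of_degree_eq_two hu ha hb hab, Finset.mem_insert,
    Finset.mem_singleton] at hy

end DegreeTwo

section Alternating

variable {V : Type*} {H : SimpleGraph V}

theorem mem_of_between_adj_of_between_adj {s t : Set V} (hst : Disjoint s t) {a b c : V}
    (hab : (H.between s t).Adj a b) (hbc : (H.between s t).Adj b c) (ha : a ∈ s) : c ∈ s := by
  have hb : b ∈ t := by
    rcases hab.2 with h | h
    exacts [h.2, absurd h.1 (Set.disjoint_left.1 hst ha)]
  rcases hbc.2 with h | h
  exacts [absurd hb (Set.disjoint_left.1 hst h.1), h.2]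

theorem exists_injective_adj_of_isCycle {n : ℕ} {a : V} {c : H.Walk a a} (hc : c.IsCycle)
    (hlen : c.length = n + 2) :
    ∃ f : Fin (n + 2) → V, Function.Injective f ∧ ∀ i, H.Adj (f i) (f (i + 1)) := by
  obtain ⟨⟨f, hf⟩⟩ :=
    (cycleGraph_isContained_iff (hlen ▸ hc.three_le_length)).2 ⟨a, c, hc, hlen⟩
  refine ⟨f, hf, fun i => f.map_rel (show (cycleGraph (n + 2)).Adj i (i + 1) from ?_)⟩
  rw [cycleGraph_adj]
  exact Or.inr (add_sub_cancel_left i 1)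

end Alternating

namespace AvoidsReducible

variable {V : Type*} [Fintype V] {H : SimpleGraph V} [DecidableRel H.Adj] {D : ℕ}
  (hR : AvoidsReducible H D) {u v x : V}
include hR

theorem not_isLight (hv : IsLight H D v) (huv : H.Adj v u) : ¬ IsLight H D u := fun hu =>
  (hR.lt_sum_reducedDegree v u hv huv).not_ge
    ((Finset.sum_le_sum fun _ _ => reducedDegree_le).trans hu.2)

theorem le_degree (hv : IsLight H D v) (huv : H.Adj u v) (hu : H.degree u = 2)
    (hux : H.Adj u x) (hxv : x ≠ v) : D ≤ H.degree x := by
  classical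
  have h := hR.lt_sum_reducedDegree v u hv huv.symm
  rw [neighborFinset_of_degree_eq_two hu huv hux hxv.symm, Finset.sum_pair hxv.symm,
    hv.reducedDegree_eq] at h
  have := reducedDegree_le (H := H) (D := D) (v := x)
  omega

theorem eq_of_adj_of_isLight (hD : 3 ≤ D) {a b : V} (hu : H.degree u = 2) (hua : H.Adj u a)
    (ha : IsLight H D a) (hub : H.Adj u b) (hb : IsLight H D b) : a = b := by
  by_contra hab
  have := hR.le_degree ha hua hu hub (Ne.symm hab)
  exact not_isLight_of_two_lt_degree (by omega) hb

section MiddleVerts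

theorem notMem_middleVerts_of_eight_cycle (hD : 3 ≤ D) {f : Fin 8 → V}
    (hf : Function.Injective f) (hadj : ∀ i, H.Adj (f i) (f (i + 1)))
    (hM : ∀ i, f (2 * i) ∈ middleNeighbors H D) : f 1 ∉ middleVerts H D := by
  intro h1
  have h1light := (mem_middleVerts.1 h1).1
  have hdeg : ∀ i, H.degree (f (2 * i)) = 2 := fun i => degree_of_mem_middleNeighbors (hM i)
  have h3big : D ≤ H.degree (f 3) := hR.le_degree h1light (hadj 1).symm (hdeg 1) (hadj 2)
    (hf.ne (by decide))
  have h5light : IsLight H D (f 5) := by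
    obtain ⟨v, hv, h4v⟩ := mem_middleNeighbors.1 (hM 2)
    have hvlight := (mem_middleVerts.1 hv).1
    rcases eq_or_eq_of_degree_eq_two (hdeg 2) (hadj 3).symm (hadj 4) (hf.ne (by decide)) h4v with
      rfl | rfl
    · exact absurd hvlight (not_isLight_of_two_lt_degree (by omega))
    · exact hvlight
  refine hR.not_isLightOctagon (fun i => f (i + 7))
    ⟨hf.comp (add_left_injective 7), fun i => ?_, fun i => ?_,
      by simpa using h1light, by simpa using h5light⟩
  · rw [add_right_comm]
    exact hadj _
  · rw [add_assoc, show (1 + 7 : Fin 8) = 0 from rfl, add_zero]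
    exact hdeg i

theorem not_forall_mem_middleNeighbors_of_eight_cycle (hD : 3 ≤ D) {f : Fin 8 → V}
    (hf : Function.Injective f) (hadj : ∀ i, H.Adj (f i) (f (i + 1))) :
    ¬ ∀ i, f (2 * i) ∈ middleNeighbors H D := by
  intro hM
  obtain ⟨v, hv, h2v⟩ := mem_middleNeighbors.1 (hM 1)
  rcases eq_or_eq_of_degree_eq_two (degree_of_mem_middleNeighbors (hM 1)) (hadj 1).symm (hadj 2)
    (hf.ne (by decide)) h2v with rfl | rfl
  · exact hR.notMem_middleVerts_of_eight_cycle hD hf hadj hM hv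
  · refine hR.notMem_middleVerts_of_eight_cycle hD (f := fun i => f (i + 2))
      (hf.comp (add_left_injective 2)) (fun i => ?_) (fun i => ?_) hv
    · rw [add_right_comm]
      exact hadj _
    · rw [show 2 * i + 2 = 2 * (i + 1) by rw [mul_add, mul_one]]
      exact hM _

theorem nine_le_egirth_between_middleNeighbors (hD : 3 ≤ D) (hg : (7 : ℕ∞) ≤ H.egirth)
    {W : Set V} (hW : Disjoint (middleNeighbors H D : Set V) W) :
    (9 : ℕ∞) ≤ (H.between (middleNeighbors H D) W).egirth := by
  have h8 := add_one_le_egirth_between_of_odd hW (g := 7) (by decide)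
    (hg.trans (egirth_anti between_le))
  rw [le_egirth] at h8 ⊢
  intro a c hc
  have hlen : 8 ≤ c.length := by exact_mod_cast h8 a c hc
  suffices hne : c.length ≠ 6 + 2 by
    have : 9 ≤ c.length := by omega
    exact_mod_cast this
  intro hlen
  obtain ⟨f, hf, hadj⟩ := exists_injective_adj_of_isCycle hc hlen
  have hstep : ∀ i, f i ∈ middleNeighbors H D → f (i + 2) ∈ middleNeighbors H D := fun i => by
    rw [show i + 2 = i + 1 + 1 from (add_assoc i 1 1).symm]
    exact mem_of_between_adj_of_between_adj hW (hadj i) (hadj (i + 1))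
  have heven : ∀ i j : Fin 8, f i ∈ middleNeighbors H D →
      f (i + 2 * j) ∈ middleNeighbors H D := fun i j hi => by
    induction j using Fin.induction with
    | zero => simpa using hi
    | succ j ih =>
      rw [← Fin.coeSucc_eq_succ, mul_add, mul_one, ← add_assoc]
      exact hstep _ ih
  rcases (hadj 0).2 with h | h
  · refine hR.not_forall_mem_middleNeighbors_of_eight_cycle hD hf (fun i => (hadj i).1) fun i => ?_
    simpa using heven 0 i h.1
  · refine hR.not_forall_mem_middleNeighbors_of_eight_cycle hD (f := fun i => f (1 + i))
      (hf.comp (add_right_injective 1)) (fun i => ?_) fun i => heven 1 i h.2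
    rw [← add_assoc]
    exact (hadj _).1

theorem two_mul_card_middleVerts_le (hD : 3 ≤ D) :
    (middleVerts H D).card * 2 ≤ (middleNeighbors H D).card * 1 := by
  classical
  refine Finset.card_mul_le_card_mul H.Adj (fun v hv => ?_) (fun m hm => ?_)
  · rw [← (mem_middleVerts.1 hv).1.1, ← card_neighborFinset_eq_degree]
    refine Finset.card_le_card fun u hu => ?_
    rw [mem_neighborFinset] at hu
    exact (Finset.mem_bipartiteAbove _).2 ⟨mem_middleNeighbors.2 ⟨v, hv, hu.symm⟩, hu⟩
  · refine Finset.card_le_one.2 fun a ha b hb => ?_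
    rw [Finset.mem_bipartiteBelow, mem_middleVerts] at ha hb
    exact hR.eq_of_adj_of_isLight hD (degree_of_mem_middleNeighbors hm) ha.2.symm ha.1.1
      hb.2.symm hb.1.1

theorem notMem_middleVerts_of_mem_middleNeighbors (hu : u ∈ middleNeighbors H D) :
    u ∉ middleVerts H D := fun hu' => by
  obtain ⟨v, hv, huv⟩ := mem_middleNeighbors.1 hu
  exact hR.not_isLight (mem_middleVerts.1 hv).1 huv.symm (mem_middleVerts.1 hu').1

theorem mem_middleVerts_or_mem_bigVerts_of_adj (hu : u ∈ middleNeighbors H D)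
    (hux : H.Adj u x) : x ∈ middleVerts H D ∨ x ∈ bigVerts H D := by
  obtain ⟨v, hv, huv⟩ := mem_middleNeighbors.1 hu
  by_cases hxv : x = v
  · exact Or.inl (hxv ▸ hv)
  · have := hR.le_degree (mem_middleVerts.1 hv).1 huv (degree_of_mem_middleNeighbors hu) hux hxv
    exact Or.inr (mem_bigVerts.2 (by omega))

theorem card_middleVerts_le (hD : 4 ≤ D) (hH : H.IsPlanar) (hg : (7 : ℕ∞) ≤ H.egirth) :
    (middleVerts H D).card ≤ 9 * (bigVerts H D).card := by
  classical
  have hcard := hR.two_mul_card_middleVerts_le (by omega)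
  rcases (middleNeighbors H D).eq_empty_or_nonempty with hempty | hne
  · rw [hempty, Finset.card_empty] at hcard
    omega
  have hdisj : Disjoint (middleNeighbors H D) (middleVerts H D ∪ bigVerts H D) := by
    refine Finset.disjoint_union_right.2
      ⟨Finset.disjoint_left.2 fun u => hR.notMem_middleVerts_of_mem_middleNeighbors,
        Finset.disjoint_left.2 fun u hu hbig => ?_⟩
    rw [mem_bigVerts, degree_of_mem_middleNeighbors hu] at hbig
    omega
  have hdensity := mul_sum_degree_add_one_le_of_isPlanar hH hne hdisj
    (fun m hm y hy => Finset.mem_union.2 (hR.mem_middleVerts_or_mem_bigVerts_of_adj hm hy))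
    (g := 9) (hR.nine_le_egirth_between_middleNeighbors (by omega) hg
      (Finset.disjoint_coe.2 hdisj))
  rw [Finset.sum_congr rfl fun m hm => degree_of_mem_middleNeighbors hm, Finset.sum_const,
    smul_eq_mul] at hdensity
  have := Finset.card_union_le (middleVerts H D) (bigVerts H D)
  omega

end MiddleVerts

section TightVerts

variable [DecidableEq V]

theorem le_degree_of_mem_tightVerts (hu : u ∈ tightVerts H D) (hux : H.Adj u x)
    (hx : x ∉ poorNeighbors H D u) : D ≤ H.degree x + 1 := by
  obtain ⟨hdeg, hcard⟩ := mem_tightVerts.1 hu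
  have hsub : poorNeighbors H D u ⊆ H.neighborFinset u := fun v hv =>
    (H.mem_neighborFinset _ _).2 (mem_poorNeighbors.1 hv).1
  obtain ⟨v, hv⟩ : (poorNeighbors H D u).Nonempty := Finset.card_pos.1 (by omega)
  have hothers : (H.neighborFinset u \ poorNeighbors H D u).card = 1 := by
    rw [Finset.card_sdiff_of_subset hsub, card_neighborFinset_eq_degree, hdeg, hcard]
  have hsingle : H.neighborFinset u \ poorNeighbors H D u = {x} :=
    Finset.eq_singleton_iff_unique_mem.2 ⟨by simp [hux, hx], fun y hy =>
      Finset.card_le_one.1 hothers.le y hy x (by simp [hux, hx])⟩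
  have hlt := hR.lt_sum_reducedDegree v u (mem_poorNeighbors.1 hv).2.1
    (mem_poorNeighbors.1 hv).1.symm
  rw [← Finset.sum_sdiff hsub, hsingle, Finset.sum_singleton, Finset.sum_congr rfl fun y hy =>
    (mem_poorNeighbors.1 hy).2.1.reducedDegree_eq, Finset.sum_const, hcard, smul_eq_mul] at hlt
  have := reducedDegree_le (H := H) (D := D) (v := x)
  omega

omit hR in
theorem card_tightNeighbors_le : (tightNeighbors H D).card ≤ (tightVerts H D).card * 2 :=
  Finset.card_biUnion_le_card_mul _ _ _ fun _ hu => (mem_tightVerts.1 hu).2.le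

theorem card_tightNeighbors_le_card_tightEnds (hD : 3 ≤ D) :
    (tightNeighbors H D).card ≤ (tightEnds H D).card := by
  rw [← mul_one (tightNeighbors H D).card, ← mul_one (tightEnds H D).card]
  refine Finset.card_mul_le_card_mul H.Adj (fun v hv => ?_) (fun w hw => ?_)
  · obtain ⟨w, hw, hvw⟩ := exists_adj_mem_tightEnds hv
    exact Finset.card_pos.2 ⟨w, (Finset.mem_bipartiteAbove _).2 ⟨hw, hvw⟩⟩
  · refine Finset.card_le_one.2 fun a ha b hb => ?_
    rw [Finset.mem_bipartiteBelow] at ha hb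
    exact hR.eq_of_adj_of_isLight hD (mem_tightEnds.1 hw).1 ha.2.symm
      (isLight_of_mem_tightNeighbors ha.1) hb.2.symm (isLight_of_mem_tightNeighbors hb.1)

theorem notMem_tightNeighbors_of_mem_tightEnds (hx : x ∈ tightEnds H D) :
    x ∉ tightNeighbors H D := fun hx' => by
  obtain ⟨-, v, hv, hxv⟩ := mem_tightEnds.1 hx
  exact hR.not_isLight (isLight_of_mem_tightNeighbors hv) hxv.symm
    (isLight_of_mem_tightNeighbors hx')

theorem mem_tightNeighbors_or_mem_bigVerts_of_adj
    (hu : u ∈ tightVerts H D ∨ u ∈ tightEnds H D) (hux : H.Adj u x) :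
    x ∈ tightNeighbors H D ∨ x ∈ bigVerts H D := by
  rw [mem_bigVerts]
  rcases hu with hu | hu
  · by_cases hx : x ∈ poorNeighbors H D u
    · exact Or.inl (mem_tightNeighbors.2 ⟨u, hu, hx⟩)
    · exact Or.inr (hR.le_degree_of_mem_tightVerts hu hux hx)
  · obtain ⟨hdeg, v, hv, huv⟩ := mem_tightEnds.1 hu
    by_cases hxv : x = v
    · exact Or.inl (hxv ▸ hv)
    · have := hR.le_degree (isLight_of_mem_tightNeighbors hv) huv hdeg hux hxv
      exact Or.inr (by omega)

theorem disjoint_tightVerts_union_tightEnds (hD : 5 ≤ D) :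
    Disjoint (tightVerts H D ∪ tightEnds H D) (tightNeighbors H D ∪ bigVerts H D) := by
  have hTdeg : ∀ u ∈ tightVerts H D, H.degree u = 3 := fun u hu => (mem_tightVerts.1 hu).1
  have hEdeg : ∀ w ∈ tightEnds H D, H.degree w = 2 := fun w hw => (mem_tightEnds.1 hw).1
  rw [Finset.disjoint_union_left, Finset.disjoint_union_right, Finset.disjoint_union_right]
  simp only [Finset.disjoint_left, mem_bigVerts]
  refine ⟨⟨fun u hu hN => ?_, fun u hu hbig => ?_⟩,
    fun w => hR.notMem_tightNeighbors_of_mem_tightEnds, fun w hw hbig => ?_⟩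
  · exact not_isLight_of_two_lt_degree (by rw [hTdeg u hu]; omega)
      (isLight_of_mem_tightNeighbors hN)
  · have := hTdeg u hu
    omega
  · have := hEdeg w hw
    omega

theorem card_tightVerts_le (hD : 5 ≤ D) (hH : H.IsPlanar) (hg : (7 : ℕ∞) ≤ H.egirth) :
    (tightVerts H D).card ≤ 4 * (bigVerts H D).card := by
  have hTdeg : ∀ u ∈ tightVerts H D, H.degree u = 3 := fun u hu => (mem_tightVerts.1 hu).1
  have hEdeg : ∀ w ∈ tightEnds H D, H.degree w = 2 := fun w hw => (mem_tightEnds.1 hw).1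
  rcases (tightVerts H D).eq_empty_or_nonempty with hempty | hne
  · simp [hempty]
  have hTE : Disjoint (tightVerts H D) (tightEnds H D) := Finset.disjoint_left.2 fun u hu hu' => by
    have := (hTdeg u hu).symm.trans (hEdeg u hu')
    omega
  have hdisj := hR.disjoint_tightVerts_union_tightEnds hD
  have hg8 := add_one_le_egirth_between_of_odd (Finset.disjoint_coe.2 hdisj) (g := 7) (by decide)
    (hg.trans (egirth_anti between_le))
  have hdensity := mul_sum_degree_add_one_le_of_isPlanar hH
    (hne.mono Finset.subset_union_left) hdisj (fun m hm y hy => Finset.mem_union.2 <|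
      hR.mem_tightNeighbors_or_mem_bigVerts_of_adj (Finset.mem_union.1 hm) hy) hg8
  rw [Finset.sum_union hTE, Finset.card_union_of_disjoint hTE, Finset.sum_congr rfl hTdeg,
    Finset.sum_congr rfl hEdeg, Finset.sum_const, Finset.sum_const, smul_eq_mul,
    smul_eq_mul] at hdensity
  have := Finset.card_union_le (tightNeighbors H D) (bigVerts H D)
  have := card_tightNeighbors_le (H := H) (D := D)
  have := hR.card_tightNeighbors_le_card_tightEnds (by omega)
  omega

end TightVerts

end AvoidsReducible

/-! ### Discharging -/

section Discharging

variable {V : Type*} [Fintype V] (H : SimpleGraph V) [DecidableRel H.Adj] (D : ℕ)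

/-- The neighbours of `v` that are light. -/
def lightNeighbors (v : V) : Finset V := {u | H.Adj v u ∧ IsLight H D u}

variable [DecidableEq V]

/-- The charge that a vertex `u` sends to its neighbour `v`: vertices of degree at least `28`
support all their neighbours, the others only their light neighbours. -/
def sentCharge (u v : V) : ℤ :=
  if 28 ≤ H.degree u then 9
  else if IsLight H D v then
    (if H.degree u = 2 then 1 else if v ∈ poorNeighbors H D u then 7 else 4)
  else 0

/-- The charge of a vertex after discharging, starting from the charge `10 * H.degree v - 28`. -/
def finalCharge (v : V) : ℤ :=
  10 * H.degree v - 28 + ∑ u ∈ H.neighborFinset v, sentCharge H D u v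
    - ∑ u ∈ H.neighborFinset v, sentCharge H D v u
end Discharging

section Charge

variable {V : Type*} [Fintype V] {H : SimpleGraph V} [DecidableRel H.Adj] {D : ℕ} {v : V}

theorem mem_lightNeighbors {u : V} : u ∈ lightNeighbors H D v ↔ H.Adj v u ∧ IsLight H D u := by
  simp [lightNeighbors]

theorem lightNeighbors_subset_neighborFinset : lightNeighbors H D v ⊆ H.neighborFinset v :=
  fun _ hu => (H.mem_neighborFinset _ _).2 (mem_lightNeighbors.1 hu).1

variable [DecidableEq V]

theorem sentCharge_nonneg (u v : V) : 0 ≤ sentCharge H D u v := by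
  rw [sentCharge]
  split_ifs <;> norm_num

theorem sum_sentCharge_nonneg (v : V) : 0 ≤ ∑ u ∈ H.neighborFinset v, sentCharge H D u v :=
  Finset.sum_nonneg fun u _ => sentCharge_nonneg u v

theorem sentCharge_le_sum {a : V} (h : H.Adj v a) :
    sentCharge H D a v ≤ ∑ u ∈ H.neighborFinset v, sentCharge H D u v :=
  Finset.single_le_sum (f := fun u => sentCharge H D u v) (fun u _ => sentCharge_nonneg u v)
    ((H.mem_neighborFinset _ _).2 h)

theorem sum_finalCharge {s : Finset V} (hs : ∀ u v, H.Adj u v → u ∈ s) :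
    ∑ v ∈ s, finalCharge H D v = 20 * H.edgeFinset.card - 28 * s.card := by
  have hswap : ∑ v ∈ s, ∑ u ∈ H.neighborFinset v, sentCharge H D u v =
      ∑ v ∈ s, ∑ u ∈ H.neighborFinset v, sentCharge H D v u := by
    refine Finset.sum_comm' fun x y => ?_
    simp only [mem_neighborFinset]
    exact ⟨fun h => ⟨h.2.symm, hs _ _ h.2.symm⟩, fun h => ⟨hs _ _ h.1.symm, h.1.symm⟩⟩
  have hdeg : ∑ v ∈ s, H.degree v = 2 * H.edgeFinset.card := by
    rw [← sum_degrees_eq_twice_card_edges]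
    refine Finset.sum_subset (Finset.subset_univ _) fun v _ hv => ?_
    rw [degree_eq_zero]
    exact fun u hu => hv (hs v u hu)
  simp only [finalCharge, Finset.sum_sub_distrib, Finset.sum_add_distrib, hswap, ← Finset.mul_sum,
    ← Nat.cast_sum, hdeg, Finset.sum_const]
  push_cast
  ring

theorem le_finalCharge_of_le_degree (hv : 28 ≤ H.degree v) :
    (H.degree v : ℤ) - 28 ≤ finalCharge H D v := by
  have hsent : ∑ u ∈ H.neighborFinset v, sentCharge H D v u = H.degree v * 9 := by
    simp only [sentCharge, hv, if_true, Finset.sum_const, card_neighborFinset_eq_degree,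
      nsmul_eq_mul]
  have := sum_sentCharge_nonneg (H := H) (D := D) v
  rw [finalCharge, hsent]
  linarith

theorem finalCharge_nonneg_of_degree_eq_two (hD : 54 ≤ D) (hdeg : H.degree v = 2)
    (hv : ¬ IsLight H D v) : 0 ≤ finalCharge H D v := by
  obtain ⟨a, ha, -⟩ := exists_adj_ne_of_degree_eq_two hdeg v
  obtain ⟨b, hb, hab⟩ := exists_adj_ne_of_degree_eq_two hdeg a
  have hN := neighborFinset_of_degree_eq_two hdeg ha hb hab
  have hsum : D < H.degree a + H.degree b := by
    by_contra! hle
    exact hv ⟨hdeg, by rwa [hN, Finset.sum_pair hab]⟩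
  have hla : IsLight H D a → H.degree a = 2 := fun h => h.1
  have hlb : IsLight H D b → H.degree b = 2 := fun h => h.1
  simp only [finalCharge, hN, Finset.sum_pair hab, sentCharge, hv, hdeg]
  split_ifs <;> grind

theorem IsLight.mem_poorNeighbors_iff {a b : V} (hv : IsLight H D v) (ha : H.Adj v a)
    (hb : H.Adj v b) (hab : a ≠ b) : v ∈ poorNeighbors H D a ↔ H.degree b = 2 := by
  rw [mem_poorNeighbors]
  refine ⟨fun ⟨_, _, w, hw, hwa, hw2⟩ => ?_, fun h => ⟨ha.symm, hv, b, hb, hab.symm, h⟩⟩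
  rcases eq_or_eq_of_degree_eq_two hv.1 ha hb hab hw with rfl | rfl
  exacts [absurd rfl hwa, hw2]

theorem poorNeighbors_subset_lightNeighbors : poorNeighbors H D v ⊆ lightNeighbors H D v :=
  fun _ hu => mem_lightNeighbors.2 ⟨(mem_poorNeighbors.1 hu).1, (mem_poorNeighbors.1 hu).2.1⟩

theorem sum_sentCharge_of_two_lt_degree (h2 : 2 < H.degree v) (h28 : H.degree v < 28) :
    ∑ u ∈ H.neighborFinset v, sentCharge H D v u =
      4 * (lightNeighbors H D v).card + 3 * (poorNeighbors H D v).card := by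
  have hpoor : poorNeighbors H D v ⊆ H.neighborFinset v :=
    poorNeighbors_subset_lightNeighbors.trans lightNeighbors_subset_neighborFinset
  have hsplit : ∀ u ∈ H.neighborFinset v, sentCharge H D v u =
      (if u ∈ lightNeighbors H D v then 4 else 0) +
        (if u ∈ poorNeighbors H D v then 3 else 0) := fun u hu => by
    have hmem : u ∈ lightNeighbors H D v ↔ IsLight H D u := by
      rw [mem_lightNeighbors, ← mem_neighborFinset, and_iff_right hu]
    have hsub : u ∈ poorNeighbors H D v → IsLight H D u := fun h => (mem_poorNeighbors.1 h).2.1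
    simp only [sentCharge, hmem, h28.not_ge, h2.ne', if_false]
    split_ifs <;> first | rfl | exact absurd (hsub ‹_›) ‹_›
  rw [Finset.sum_congr rfl hsplit, Finset.sum_add_distrib, ← Finset.sum_filter,
    ← Finset.sum_filter, Finset.filter_mem_eq_inter, Finset.filter_mem_eq_inter,
    Finset.inter_eq_right.2 lightNeighbors_subset_neighborFinset, Finset.inter_eq_right.2 hpoor,
    Finset.sum_const, Finset.sum_const, nsmul_eq_mul, nsmul_eq_mul]
  ring

end Charge

namespace AvoidsReducible

variable {V : Type*} [Fintype V] [DecidableEq V] {H : SimpleGraph V} [DecidableRel H.Adj] {D : ℕ}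
  (hR : AvoidsReducible H D) {u v : V}
include hR

omit [DecidableEq V] in
theorem two_le_degree_of_adj (huv : H.Adj u v) : 2 ≤ H.degree u := by
  have := hR.degree_ne_one u
  have : 0 < H.degree u := (H.degree_pos_iff_exists_adj u).2 ⟨v, huv⟩
  omega

theorem le_finalCharge_of_isLight (hv : IsLight H D v) :
    (if v ∈ middleVerts H D then -6 else 0 : ℤ) ≤ finalCharge H D v := by
  obtain ⟨a, ha, -⟩ := exists_adj_ne_of_degree_eq_two hv.1 v
  obtain ⟨b, hb, hab⟩ := exists_adj_ne_of_degree_eq_two hv.1 a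
  have hN := neighborFinset_of_degree_eq_two hv.1 ha hb hab
  have hla := hR.not_isLight hv ha
  have hlb := hR.not_isLight hv hb
  have := hR.two_le_degree_of_adj ha.symm
  have := hR.two_le_degree_of_adj hb.symm
  have hmid : v ∈ middleVerts H D ↔ H.degree a = 2 ∧ H.degree b = 2 := by
    simp only [mem_middleVerts, hv, ← mem_neighborFinset, hN, Finset.mem_insert,
      Finset.mem_singleton, forall_eq_or_imp, forall_eq, true_and]
  simp only [finalCharge, hN, Finset.sum_pair hab, sentCharge, hv, hla, hlb, hv.1, hmid,
    hv.mem_poorNeighbors_iff ha hb hab, hv.mem_poorNeighbors_iff hb ha hab.symm]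
  split_ifs <;> first | contradiction | omega

omit [DecidableEq V] in
theorem exists_adj_lt_degree_of_mul_degree_le (hu : IsLight H D u) (huv : H.Adj u v) {m : ℕ}
    (hm : H.degree v * m ≤ D) : ∃ y, H.Adj v y ∧ m < H.degree y := by
  by_contra! hle
  refine ((hR.lt_sum_reducedDegree u v hu huv).trans_le ?_).not_ge hm
  rw [← smul_eq_mul, ← card_neighborFinset_eq_degree]
  exact Finset.sum_le_card_nsmul _ _ _ fun y hy =>
    reducedDegree_le.trans (hle y ((H.mem_neighborFinset _ _).1 hy))

omit [DecidableEq V] in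
theorem card_lightNeighbors_lt_degree (hv : H.degree v ≤ D)
    (hne : (lightNeighbors H D v).Nonempty) : (lightNeighbors H D v).card < H.degree v := by
  obtain ⟨u, hu⟩ := hne
  obtain ⟨hvu, hlight⟩ := mem_lightNeighbors.1 hu
  rw [← card_neighborFinset_eq_degree]
  refine Finset.card_lt_card (lightNeighbors_subset_neighborFinset.ssubset_of_ne fun heq => ?_)
  have hone : ∀ y ∈ H.neighborFinset v, reducedDegree H D y = 1 := fun y hy =>
    (mem_lightNeighbors.1 (heq ▸ hy)).2.reducedDegree_eq
  have hlt := hR.lt_sum_reducedDegree u v hlight hvu.symm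
  rw [Finset.sum_congr rfl hone, Finset.sum_const, card_neighborFinset_eq_degree, smul_eq_mul,
    mul_one] at hlt
  exact hlt.not_ge hv

theorem le_finalCharge_of_two_lt_degree (hD : 162 ≤ D) (h2 : 2 < H.degree v)
    (h28 : H.degree v < 28) :
    (if v ∈ tightVerts H D then -3 else 0 : ℤ) ≤ finalCharge H D v := by
  have hpoor := Finset.card_le_card (poorNeighbors_subset_lightNeighbors (H := H) (D := D) (v := v))
  have htight (h : H.degree v = 3) :
      v ∈ tightVerts H D ↔ (poorNeighbors H D v).card = 2 := by
    rw [mem_tightVerts, and_iff_right h]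
  rw [finalCharge, sum_sentCharge_of_two_lt_degree h2 h28]
  rcases (lightNeighbors H D v).eq_empty_or_nonempty with hempty | hne
  · have := sum_sentCharge_nonneg (H := H) (D := D) v
    rw [hempty, Finset.card_empty] at hpoor ⊢
    split_ifs <;> omega
  have hlt := hR.card_lightNeighbors_lt_degree (by omega) hne
  obtain ⟨u, hu⟩ := hne
  obtain ⟨hvu, hlight⟩ := mem_lightNeighbors.1 hu
  by_cases h7 : 7 ≤ H.degree v
  · have := sum_sentCharge_nonneg (H := H) (D := D) v
    split_ifs <;> omega
  · obtain ⟨y, hvy, hy⟩ := hR.exists_adj_lt_degree_of_mul_degree_le hlight hvu.symm (m := 27)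
      (by omega)
    have hnine : 9 ≤ ∑ u ∈ H.neighborFinset v, sentCharge H D u v := by
      have := sentCharge_le_sum (H := H) (D := D) hvy
      rwa [sentCharge, if_pos (Nat.succ_le_of_lt hy)] at this
    split_ifs with hT
    · omega
    · rcases eq_or_ne (H.degree v) 3 with h3 | h3
      · have := mt (htight h3).2 hT
        omega
      · omega

/-- The bounds `9` and `4` on the numbers of middle and tight vertices per big vertex make the
surplus `66 = 9 * 6 + 4 * 3` of the big vertices pay for the deficits of the others. -/
theorem le_finalCharge (hD : 162 ≤ D) (hv : H.degree v ≠ 0) :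
    (if v ∈ bigVerts H D then 66 else 0 : ℤ) + (if v ∈ middleVerts H D then -6 else 0)
      + (if v ∈ tightVerts H D then -3 else 0) ≤ finalCharge H D v := by
  have hone := hR.degree_ne_one v
  have hbig : v ∈ bigVerts H D → 161 ≤ H.degree v := fun h => by rw [mem_bigVerts] at h; omega
  have hmid : v ∈ middleVerts H D → IsLight H D v := fun h => (mem_middleVerts.1 h).1
  have hlight : IsLight H D v → H.degree v = 2 := fun h => h.1
  have htight : v ∈ tightVerts H D → H.degree v = 3 := fun h => (mem_tightVerts.1 h).1
  by_cases h28 : 28 ≤ H.degree v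
  · have := le_finalCharge_of_le_degree (D := D) h28
    rw [if_neg (c := v ∈ middleVerts H D) (by grind), if_neg (c := v ∈ tightVerts H D) (by grind)]
    split_ifs <;> grind
  rw [if_neg (by grind), zero_add]
  by_cases hL : IsLight H D v
  · rw [if_neg (c := v ∈ tightVerts H D) (by grind), add_zero]
    exact hR.le_finalCharge_of_isLight hL
  rw [if_neg (mt hmid hL), zero_add]
  rcases eq_or_ne (H.degree v) 2 with h2 | h2
  · rw [if_neg (by grind)]
    exact finalCharge_nonneg_of_degree_eq_two (by omega) h2 hL
  · exact hR.le_finalCharge_of_two_lt_degree hD (by omega) (by omega)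

omit [DecidableEq V] in
theorem eq_bot (hD : 162 ≤ D) (hH : H.IsPlanar) (hg : (7 : ℕ∞) ≤ H.egirth) : H = ⊥ := by
  classical
  by_contra hne
  obtain ⟨a, b, hab⟩ := ne_bot_iff_exists_adj.1 hne
  let s : Finset V := {v | H.degree v ≠ 0}
  have hmem : ∀ v, v ∈ s ↔ H.degree v ≠ 0 := fun v => by simp [s]
  have hsupp : ∀ u v, H.Adj u v → u ∈ s := fun u v h => by
    rw [hmem, ← Nat.pos_iff_ne_zero, degree_pos_iff_exists_adj]
    exact ⟨v, h⟩
  have hdensity := mul_ncard_edgeSet_add_one_le_of_isPlanar hH (g := 7) hg ⟨a, hsupp a b hab⟩ hsupp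
  rw [← coe_edgeFinset, Set.ncard_coe_finset] at hdensity
  have hbig : bigVerts H D ⊆ s := fun v hv => by
    rw [mem_bigVerts] at hv
    rw [hmem]
    omega
  have htotal := Finset.sum_le_sum fun v hv => hR.le_finalCharge hD ((hmem v).1 hv)
  rw [sum_finalCharge hsupp] at htotal
  simp only [Finset.sum_add_distrib, ← Finset.sum_filter, Finset.filter_mem_eq_inter,
    Finset.sum_const, nsmul_eq_mul, Finset.inter_eq_right.2 hbig] at htotal
  have hmid := hR.card_middleVerts_le (by omega) hH hg
  have htight := hR.card_tightVerts_le (by omega) hH hg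
  have hmid' := Finset.card_le_card (Finset.inter_subset_right : s ∩ middleVerts H D ⊆ _)
  have htight' := Finset.card_le_card (Finset.inter_subset_right : s ∩ tightVerts H D ⊆ _)
  omega

end AvoidsReducible

/-! ### Extending frugal colourings -/

/-- The map `c` takes different values on any two vertices of `s` adjacent in `S`. -/
def IsColoringOn {V α : Type*} (S : SimpleGraph V) (s : Set V) (c : V → α) : Prop :=
  ∀ u ∈ s, ∀ v ∈ s, S.Adj u v → c u ≠ c v

namespace IsColoringOn

variable {V α : Type*} [DecidableEq V] {S : SimpleGraph V} {s : Set V}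

theorem update {c : V → α} (hc : IsColoringOn S s c) {x : V} {a : α}
    (ha : ∀ z ∈ s, S.Adj x z → a ≠ c z) : IsColoringOn S (insert x s) (Function.update c x a) := by
  intro u hu v hv huv
  by_cases hux : u = x
  · subst hux
    rw [Function.update_self, Function.update_of_ne huv.ne']
    exact ha v (hv.resolve_left huv.ne') huv
  by_cases hvx : v = x
  · subst hvx
    rw [Function.update_self, Function.update_of_ne huv.ne]
    exact (ha u (hu.resolve_left huv.ne) huv.symm).symm
  rw [Function.update_of_ne hux, Function.update_of_ne hvx]
  exact hc u (hu.resolve_left hux) v (hv.resolve_left hvx) huv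

theorem update_pair {c : V → α} (hc : IsColoringOn S s c) {x y : V} {a b : α} (hab : a ≠ b)
    (ha : ∀ z ∈ s, S.Adj x z → a ≠ c z) (hb : ∀ z ∈ s, S.Adj y z → b ≠ c z) :
    IsColoringOn S (insert x (insert y s)) (Function.update (Function.update c y b) x a) := by
  refine (hc.update hb).update fun z hz hxz => ?_
  by_cases hzy : z = y
  · rwa [hzy, Function.update_self]
  · rw [Function.update_of_ne hzy]
    exact ha z (hz.resolve_left hzy) hxz

theorem exists_update {n : ℕ} {c : V → Fin n} (hc : IsColoringOn S s c) {x : V} {t : Finset V}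
    (ht : ∀ z ∈ s, S.Adj x z → z ∈ t) (hn : t.card < n) :
    ∃ a, IsColoringOn S (insert x s) (Function.update c x a) := by
  have hcard : (t.image c).card < (Finset.univ : Finset (Fin n)).card := by
    rw [Finset.card_univ, Fintype.card_fin]
    exact Finset.card_image_le.trans_lt hn
  obtain ⟨a, -, ha⟩ := Finset.exists_mem_notMem_of_card_lt_card hcard
  exact ⟨a, hc.update fun z hz hxz h => ha (Finset.mem_image.2 ⟨z, ht z hz hxz, h.symm⟩)⟩

omit [DecidableEq V] in
theorem exists_univ [Fintype V] [DecidableRel S.Adj] {n : ℕ} {r : Finset V} {c : V → Fin n}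
    (hc : IsColoringOn S (r : Set V)ᶜ c) (hr : ∀ x ∈ r, S.degree x < n) :
    ∃ c : V → Fin n, IsColoringOn S Set.univ c := by
  classical
  induction r using Finset.induction_on generalizing c with
  | empty => exact ⟨c, by simpa using hc⟩
  | insert x r hx ih =>
    obtain ⟨a, ha⟩ := hc.exists_update (t := S.neighborFinset x)
      (fun z _ => (S.mem_neighborFinset _ _).2) (hr x (Finset.mem_insert_self _ _))
    have hcompl : insert x ((insert x r : Finset V) : Set V)ᶜ = (r : Set V)ᶜ := by
      ext y
      by_cases hy : y = x <;> simp [hy, hx]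
    exact ih (hcompl ▸ ha) fun y hy => hr y (Finset.mem_insert_of_mem hy)

end IsColoringOn

section Frugal

variable {V α β : Type*} {H : SimpleGraph V} {k n : ℕ}

theorem isFrugalColoring_comp {c : V → α} (hc : H.IsFrugalColoring k c) {φ : α → β}
    (hφ : Function.Injective φ) : H.IsFrugalColoring k (φ ∘ c) := by
  refine ⟨fun u v h he => hc.1 u v h (hφ he), fun v b => ?_⟩
  by_cases hb : ∃ a, φ a = b
  · obtain ⟨a, rfl⟩ := hb
    simpa only [Function.comp_apply, hφ.eq_iff] using hc.2 v a
  · have hempty : {u | u ∈ H.neighborSet v ∧ (φ ∘ c) u = b} = ∅ :=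
      Set.eq_empty_iff_forall_notMem.2 fun u hu => hb ⟨c u, hu.2⟩
    rw [hempty, Set.ncard_empty]
    exact k.zero_le

theorem frugalChromaticNumber_le {c : V → Fin n} (hc : H.IsFrugalColoring k c) :
    H.frugalChromaticNumber k ≤ n :=
  Nat.sInf_le ⟨_, fun v => (c v).isLt, isFrugalColoring_comp hc Fin.val_injective⟩

theorem ncard_update_le_of_deleteIncidenceSet [Finite V] [DecidableEq V] {c : V → α}
    {a b : α} {v x : V} (hc : (H.deleteIncidenceSet v).IsFrugalColoring k c) (hx : x ≠ v)
    (hab : H.Adj v x → a ≠ b) :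
    {u | u ∈ H.neighborSet x ∧ Function.update c v a u = b}.ncard ≤ k := by
  refine le_trans (Set.ncard_le_ncard fun u ⟨hxu, hu⟩ => ?_) (hc.2 x b)
  have huv : u ≠ v := by
    rintro rfl
    rw [Function.update_self] at hu
    exact hab (H.adj_symm hxu) hu
  rw [Function.update_of_ne huv] at hu
  exact ⟨deleteIncidenceSet_adj.2 ⟨hxu, hx, huv⟩, hu⟩

variable [Fintype V] [DecidableEq V] [DecidableRel H.Adj] {v x : V}

theorem card_edgeFinset_deleteIncidenceSet_lt (hv : H.degree v ≠ 0) :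
    (H.deleteIncidenceSet v).edgeFinset.card < H.edgeFinset.card := by
  have h := H.degree_le_card_edgeFinset v
  rw [card_edgeFinset_deleteIncidenceSet]
  omega

theorem card_erase_neighborFinset (h : H.Adj v x) :
    ((H.neighborFinset x).erase v).card = H.degree x - 1 := by
  rw [Finset.card_erase_of_mem ((H.mem_neighborFinset _ _).2 h.symm),
    card_neighborFinset_eq_degree]

theorem card_filter_le_card_fiber_mul_le [Fintype α] [DecidableEq α] (s : Finset β) (c : β → α)
    (k : ℕ) : (Finset.univ.filter fun a => k ≤ (s.filter (c · = a)).card).card * k ≤ s.card := by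
  rw [← smul_eq_mul]
  refine (Finset.card_nsmul_le_sum _ (fun a => (s.filter (c · = a)).card) k
    fun a ha => (Finset.mem_filter.1 ha).2).trans ?_
  rw [Finset.card_eq_sum_card_fiberwise (f := c) (t := Finset.univ) fun _ _ => Finset.mem_univ _]
  exact Finset.sum_le_sum_of_subset (Finset.subset_univ _)

variable (H) in
/-- The colours that already appear at least `k` times among the neighbours of `x` other than
`v`. -/
def saturatedColors [Fintype α] [DecidableEq α] (k : ℕ) (c : V → α) (v x : V) : Finset α :=
  {a | k ≤ (((H.neighborFinset x).erase v).filter (c · = a)).card}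

theorem card_saturatedColors_le [Fintype α] [DecidableEq α] (hk : 1 ≤ k) (c : V → α)
    (h : H.Adj v x) : (saturatedColors H k c v x).card ≤ (H.degree x - 1) / k := by
  rw [Nat.le_div_iff_mul_le hk, ← card_erase_neighborFinset h]
  exact card_filter_le_card_fiber_mul_le _ c k

theorem exists_notMem_saturatedColors {c : V → Fin n} (hk : 1 ≤ k)
    (hn : ∑ y ∈ H.neighborFinset v, (1 + (H.degree y - 1) / k) < n) :
    ∃ a, ∀ y, H.Adj v y → a ≠ c y ∧ a ∉ saturatedColors H k c v y := by
  have hcard : ((H.neighborFinset v).biUnion fun y => insert (c y) (saturatedColors H k c v y)).card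
      < (Finset.univ : Finset (Fin n)).card := by
    rw [Finset.card_univ, Fintype.card_fin]
    refine (Finset.card_biUnion_le.trans (Finset.sum_le_sum fun y hy => ?_)).trans_lt hn
    refine (Finset.card_insert_le _ _).trans ?_
    rw [add_comm]
    gcongr
    exact card_saturatedColors_le hk c ((H.mem_neighborFinset _ _).1 hy)
  obtain ⟨a, -, ha⟩ := Finset.exists_mem_notMem_of_card_lt_card hcard
  exact ⟨a, fun y hy => not_or.1 fun h =>
    ha (Finset.mem_biUnion.2 ⟨y, (H.mem_neighborFinset _ _).2 hy, Finset.mem_insert.2 h⟩)⟩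

theorem ncard_update_le_of_notMem_saturatedColors [Fintype α] [DecidableEq α] {c : V → α} {a : α}
    (ha : a ∉ saturatedColors H k c v x) :
    {u | u ∈ H.neighborSet x ∧ Function.update c v a u = a}.ncard ≤ k := by
  have hlt : (((H.neighborFinset x).erase v).filter (c · = a)).card < k := by
    simpa [saturatedColors] using ha
  refine le_trans ?_ ((Finset.card_insert_le v _).trans (Nat.succ_le_of_lt hlt))
  rw [← Set.ncard_coe_finset]
  refine Set.ncard_le_ncard fun u ⟨hxu, hu⟩ => ?_
  by_cases huv : u = v
  · simp [huv]
  · rw [Function.update_of_ne huv] at hu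
    simp [huv, hu, (H.mem_neighborSet x u).1 hxu]

theorem isFrugalColoring_update [Fintype α] [DecidableEq α] {c : V → α} {a : α}
    (hc : (H.deleteIncidenceSet v).IsFrugalColoring k c) (hv : H.degree v ≤ k)
    (ha : ∀ y, H.Adj v y → a ≠ c y ∧ a ∉ saturatedColors H k c v y) :
    H.IsFrugalColoring k (Function.update c v a) := by
  have hproper : IsColoringOn H {v}ᶜ c := fun x hx y hy hxy =>
    hc.1 x y (deleteIncidenceSet_adj.2 ⟨hxy, hx, hy⟩)
  refine ⟨fun x y => hproper.update (fun z _ hz => (ha z hz).1) x (Classical.em _) y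
    (Classical.em _), fun x b => ?_⟩
  by_cases hxv : x = v
  · subst hxv
    refine le_trans ?_ hv
    rw [← card_neighborFinset_eq_degree, ← Set.ncard_coe_finset]
    exact Set.ncard_le_ncard fun u hu => by simpa using hu.1
  by_cases hab : H.Adj v x ∧ a = b
  · obtain ⟨hvx, rfl⟩ := hab
    exact ncard_update_le_of_notMem_saturatedColors (ha x hvx).2
  · exact ncard_update_le_of_deleteIncidenceSet hc hxv (not_and.1 hab)

omit [DecidableEq V] in
theorem exists_isFrugalColoring_of_deleteIncidenceSet {c : V → Fin n} (hk : 1 ≤ k)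
    (hc : (H.deleteIncidenceSet v).IsFrugalColoring k c) (hv : H.degree v ≤ k)
    (hn : ∑ y ∈ H.neighborFinset v, (1 + (H.degree y - 1) / k) < n) :
    ∃ c : V → Fin n, H.IsFrugalColoring k c := by
  classical
  obtain ⟨a, ha⟩ := exists_notMem_saturatedColors (c := c) hk hn
  exact ⟨_, isFrugalColoring_update hc hv ha⟩

end Frugal

/-! ### One-frugal colourings -/

/-- The square of a graph: distinct vertices at distance at most two are joined. Its proper
colourings are the `1`-frugal colourings. -/
def graphSquare {V : Type*} (H : SimpleGraph V) : SimpleGraph V where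
  Adj u v := u ≠ v ∧ (H.Adj u v ∨ ∃ y, H.Adj y u ∧ H.Adj y v)
  symm := ⟨fun _ _ ⟨hne, h⟩ => ⟨hne.symm, h.imp Adj.symm fun ⟨y, hu, hv⟩ => ⟨y, hv, hu⟩⟩⟩
  loopless := ⟨fun _ h => h.1 rfl⟩

instance {V : Type*} [Fintype V] [DecidableEq V] (H : SimpleGraph V) [DecidableRel H.Adj] :
    DecidableRel (graphSquare H).Adj := fun u v =>
  inferInstanceAs (Decidable (u ≠ v ∧ (H.Adj u v ∨ ∃ y, H.Adj y u ∧ H.Adj y v)))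

section Square

theorem isFrugalColoring_one_iff {V α : Type*} [Finite V] {H : SimpleGraph V} {c : V → α} :
    H.IsFrugalColoring 1 c ↔ ∀ u v, (graphSquare H).Adj u v → c u ≠ c v := by
  constructor
  · rintro ⟨hp, hf⟩ u v ⟨hne, h | ⟨y, hu, hv⟩⟩ hcuv
    · exact hp u v h hcuv
    · exact hne ((Set.ncard_le_one).1 (hf y (c v)) u ⟨hu, hcuv⟩ v ⟨hv, rfl⟩)
  · refine fun h => ⟨fun u v huv => h u v ⟨huv.ne, Or.inl huv⟩, fun v a => ?_⟩
    refine (Set.ncard_le_one).2 fun x hx y hy => ?_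
    by_contra hne
    exact h x y ⟨hne, Or.inr ⟨v, hx.1, hy.1⟩⟩ (hx.2.trans hy.2.symm)

theorem isColoringOn_graphSquare {V α : Type*} [Finite V] {H : SimpleGraph V} {v : V} {s : Set V}
    {c : V → α} (hc : (H.deleteIncidenceSet v).IsFrugalColoring 1 c) (hv : v ∉ s)
    (hN : ∀ a ∈ s, ∀ b ∈ s, H.Adj v a → H.Adj v b → a = b) :
    IsColoringOn (graphSquare H) s c := by
  rw [isFrugalColoring_one_iff] at hc
  rintro a ha b hb ⟨hne, h⟩
  have hav : a ≠ v := fun h => hv (h ▸ ha)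
  have hbv : b ≠ v := fun h => hv (h ▸ hb)
  refine hc a b ⟨hne, h.imp (fun h => deleteIncidenceSet_adj.2 ⟨h, hav, hbv⟩) ?_⟩
  rintro ⟨y, hya, hyb⟩
  have hyv : y ≠ v := by
    rintro rfl
    exact hne (hN a ha b hb hya hyb)
  exact ⟨y, deleteIncidenceSet_adj.2 ⟨hya, hyv, hav⟩, deleteIncidenceSet_adj.2 ⟨hyb, hyv, hbv⟩⟩

variable {V : Type*} [Fintype V] [DecidableEq V] {H : SimpleGraph V} [DecidableRel H.Adj] {D : ℕ}

theorem neighborFinset_graphSquare_subset (u : V) : (graphSquare H).neighborFinset u ⊆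
    (H.neighborFinset u).biUnion fun y => insert y ((H.neighborFinset y).erase u) := by
  intro z hz
  rw [Finset.mem_biUnion]
  rcases ((graphSquare H).mem_neighborFinset u z).1 hz with ⟨hne, h | ⟨y, hu, hv⟩⟩
  · exact ⟨z, by simpa using h, Finset.mem_insert_self _ _⟩
  · exact ⟨y, by simpa using hu.symm, by simp [hne.symm, hv]⟩

theorem card_insert_erase_neighborFinset_le {u y : V} (h : H.Adj u y) :
    (insert y ((H.neighborFinset y).erase u)).card ≤ H.degree y := by
  refine (Finset.card_insert_le _ _).trans_eq ?_
  rw [card_erase_neighborFinset h]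
  exact Nat.sub_add_cancel ((H.degree_pos_iff_exists_adj y).2 ⟨u, h.symm⟩)

theorem degree_graphSquare_le (u : V) :
    (graphSquare H).degree u ≤ ∑ y ∈ H.neighborFinset u, H.degree y := by
  rw [← card_neighborFinset_eq_degree]
  refine (Finset.card_le_card (neighborFinset_graphSquare_subset u)).trans <|
    Finset.card_biUnion_le.trans (Finset.sum_le_sum fun y hy => ?_)
  exact card_insert_erase_neighborFinset_le ((H.mem_neighborFinset _ _).1 hy)

theorem card_filter_not_isLight_neighborFinset_graphSquare_le (u : V) :
    (((graphSquare H).neighborFinset u).filter fun z => ¬ IsLight H D z).card ≤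
      ∑ y ∈ H.neighborFinset u, reducedDegree H D y := by
  refine (Finset.card_le_card (Finset.filter_subset_filter _
    (neighborFinset_graphSquare_subset u))).trans ?_
  rw [Finset.filter_biUnion]
  refine Finset.card_biUnion_le.trans (Finset.sum_le_sum fun y hy => ?_)
  rw [mem_neighborFinset] at hy
  rw [reducedDegree]
  split_ifs with hlight
  · rw [Finset.filter_insert, if_neg (not_not.2 hlight)]
    refine (Finset.card_filter_le _ _).trans_eq ?_
    rw [card_erase_neighborFinset hy, hlight.1]
  · exact (Finset.card_filter_le _ _).trans (card_insert_erase_neighborFinset_le hy)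

omit [DecidableEq V] in
theorem exists_isFrugalColoring_of_isColoringOn {s : Set V} {c : V → Fin (D + 1)}
    (hc : IsColoringOn (graphSquare H) s c) (hs : ∀ x, ¬ IsLight H D x → x ∈ s) :
    ∃ c : V → Fin (D + 1), H.IsFrugalColoring 1 c := by
  classical
  let r : Finset V := {x | IsLight H D x}
  have hmem : ∀ x, x ∈ r ↔ IsLight H D x := fun x => by simp [r]
  have hrs : ∀ x ∈ (r : Set V)ᶜ, x ∈ s := fun x hx => hs x (mt (hmem x).2 hx)
  obtain ⟨c', hc'⟩ := IsColoringOn.exists_univ (S := graphSquare H) (r := r) (c := c)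
    (fun u hu v hv => hc u (hrs u hu) v (hrs v hv))
    fun x hx => Nat.lt_succ_of_le ((degree_graphSquare_le x).trans ((hmem x).1 hx).2)
  exact ⟨c', isFrugalColoring_one_iff.2 fun u v => hc' u trivial v trivial⟩

omit [DecidableEq V] in
theorem exists_isFrugalColoring_of_sum_reducedDegree_le {v u : V} {c : V → Fin (D + 1)}
    (hc : (H.deleteIncidenceSet v).IsFrugalColoring 1 c) (hv : IsLight H D v) (hvu : H.Adj v u)
    (hle : ∑ y ∈ H.neighborFinset u, reducedDegree H D y ≤ D) :
    ∃ c : V → Fin (D + 1), H.IsFrugalColoring 1 c := by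
  classical
  obtain ⟨w, hvw, huw⟩ := exists_adj_ne_of_degree_eq_two hv.1 u
  have hs : IsColoringOn (graphSquare H) {x | ¬ IsLight H D x ∧ x ≠ u} c := by
    refine isColoringOn_graphSquare hc (fun h => h.1 hv) fun a ha b hb hva hvb => ?_
    rw [(eq_or_eq_of_degree_eq_two hv.1 hvu hvw huw hva).resolve_left ha.2,
      (eq_or_eq_of_degree_eq_two hv.1 hvu hvw huw hvb).resolve_left hb.2]
  obtain ⟨a, ha⟩ := hs.exists_update (x := u)
    (fun z hz huz => Finset.mem_filter.2 ⟨((graphSquare H).mem_neighborFinset u z).2 huz, hz.1⟩)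
    (Nat.lt_succ_of_le ((card_filter_not_isLight_neighborFinset_graphSquare_le u).trans hle))
  exact exists_isFrugalColoring_of_isColoringOn ha fun x hx => or_iff_not_imp_left.2 fun hxu =>
    ⟨hx, hxu⟩

end Square

/-! ### Reducible configurations -/

section Reducible

variable {V : Type*} [Fintype V] {H : SimpleGraph V} [DecidableRel H.Adj] {D k : ℕ}

namespace IsLightOctagon

variable {f : Fin 8 → V} {z : V}

theorem reverse (hf : IsLightOctagon H D f) : IsLightOctagon H D fun i => f (-i) where
  injective := hf.injective.comp neg_injective
  adj i := by simpa only [neg_add_rev, neg_add_cancel_comm] using (hf.adj (-(i + 1))).symm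
  degree_odd i := by
    rw [(by decide : ∀ i : Fin 8, -(2 * i + 1) = 2 * (-i - 1) + 1)]
    exact hf.degree_odd _
  isLight_two := hf.isLight_six
  isLight_six := hf.isLight_two

theorem rotate (hf : IsLightOctagon H D f) : IsLightOctagon H D fun i => f (i + 4) where
  injective := hf.injective.comp (add_left_injective 4)
  adj i := by simpa only [add_right_comm] using hf.adj (i + 4)
  degree_odd i := by
    rw [(by decide : ∀ i : Fin 8, 2 * i + 1 + 4 = 2 * (i + 2) + 1)]
    exact hf.degree_odd _
  isLight_two := hf.isLight_six
  isLight_six := hf.isLight_two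

theorem eq_or_adj_zero_of_graphSquare_adj_one (hf : IsLightOctagon H D f)
    (h : (graphSquare H).Adj (f 1) z) (h2 : z ≠ f 2) (h3 : z ≠ f 3) : z = f 0 ∨ H.Adj (f 0) z := by
  have hf1 : ∀ {y}, H.Adj (f 1) y → y = f 0 ∨ y = f 2 :=
    eq_or_eq_of_degree_eq_two (hf.degree_odd 0) (hf.adj 0).symm (hf.adj 1)
      (hf.injective.ne (by decide))
  have hf2 : ∀ {y}, H.Adj (f 2) y → y = f 1 ∨ y = f 3 :=
    eq_or_eq_of_degree_eq_two hf.isLight_two.1 (hf.adj 1).symm (hf.adj 2)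
      (hf.injective.ne (by decide))
  rcases h with ⟨hne, h | ⟨y, hy, hyz⟩⟩
  · exact Or.inl ((hf1 h).resolve_right h2)
  · rcases hf1 hy.symm with rfl | rfl
    · exact Or.inr hyz
    · rcases hf2 hyz with rfl | rfl
      exacts [absurd rfl hne, absurd rfl h3]

theorem not_graphSquare_adj_one_five (hf : IsLightOctagon H D f) :
    ¬ (graphSquare H).Adj (f 1) (f 5) := by
  intro h
  have hne : ∀ {i j}, i ≠ j → f i ≠ f j := hf.injective.ne
  rcases hf.eq_or_adj_zero_of_graphSquare_adj_one h (hne (by decide)) (hne (by decide))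
    with h | h
  · exact hne (by decide) h
  · rcases eq_or_eq_of_degree_eq_two (hf.degree_odd 2) (hf.adj 4).symm (hf.adj 5)
      (hne (by decide)) h.symm with h | h <;> exact hne (by decide) h

end IsLightOctagon

theorem exists_ne_forall_adj_ne {x w w' : V} (h : H.Adj x w) (h' : H.Adj x w') (hne : w ≠ w')
    (hD : H.degree x ≤ D) (c : V → Fin (D + 1)) : ∃ a b, a ≠ b ∧
      ∀ z, z ≠ w → z ≠ w' → z = x ∨ H.Adj x z → a ≠ c z ∧ b ≠ c z := by
  classical
  let t := insert x (((H.neighborFinset x).erase w).erase w')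
  have ht : t.card + 1 ≤ D := by
    have hpos : 1 < H.degree x := by
      rw [← card_neighborFinset_eq_degree, Finset.one_lt_card]
      exact ⟨w, by simpa using h, w', by simpa using h', hne⟩
    have hle := Finset.card_insert_le x (((H.neighborFinset x).erase w).erase w')
    rw [Finset.card_erase_of_mem (by simp [h', hne.symm]),
      card_erase_neighborFinset h.symm] at hle
    change t.card ≤ _ at hle
    omega
  have hcard : 1 < (t.image c)ᶜ.card := by
    have hle := Finset.card_image_le (s := t) (f := c)
    rw [Finset.card_compl, Fintype.card_fin]
    omega
  obtain ⟨a, ha, b, hb, hab⟩ := Finset.one_lt_card.1 hcard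
  rw [Finset.mem_compl] at ha hb
  refine ⟨a, b, hab, fun z hz hz' hxz => ?_⟩
  have hzt : c z ∈ t.image c := Finset.mem_image_of_mem c (by simp [t, hz, hz', hxz])
  exact ⟨fun h => ha (h ▸ hzt), fun h => hb (h ▸ hzt)⟩

namespace IsLightOctagon

variable {f : Fin 8 → V}

variable (H D) in
/-- The vertices whose colours are kept when the light octagon `f` is recoloured. -/
def keptVerts (f : Fin 8 → V) : Set V := {z | ¬ IsLight H D z ∧ ∀ i, z ≠ f (2 * i + 1)}

theorem exists_ne_forall_graphSquare_adj_ne (hf : IsLightOctagon H D f)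
    (hD : H.degree (f 0) ≤ D) (c : V → Fin (D + 1)) : ∃ a b, a ≠ b ∧ ∀ z ∈ keptVerts H D f,
      (graphSquare H).Adj (f 1) z ∨ (graphSquare H).Adj (f 7) z → a ≠ c z ∧ b ≠ c z := by
  obtain ⟨a, b, hab, h⟩ := exists_ne_forall_adj_ne (hf.adj 0) (hf.adj 7).symm
    (hf.injective.ne (by decide)) hD c
  refine ⟨a, b, hab, fun z hz hadj => h z (hz.2 0) (hz.2 3) ?_⟩
  have hlight : ∀ {v}, IsLight H D v → z ≠ v := fun hv h => hz.1 (h ▸ hv)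
  rcases hadj with hadj | hadj
  · exact hf.eq_or_adj_zero_of_graphSquare_adj_one hadj (hlight hf.isLight_two) (hz.2 1)
  · exact hf.reverse.eq_or_adj_zero_of_graphSquare_adj_one hadj (hlight hf.isLight_six) (hz.2 2)

theorem isColoringOn_keptVerts {c : V → Fin (D + 1)} (hf : IsLightOctagon H D f)
    (hc : (H.deleteIncidenceSet (f 2)).IsFrugalColoring 1 c) :
    IsColoringOn (graphSquare H) (keptVerts H D f) c := by
  refine isColoringOn_graphSquare hc (fun h => h.1 hf.isLight_two) fun z hz _ _ hadj _ => ?_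
  rcases eq_or_eq_of_degree_eq_two hf.isLight_two.1 (hf.adj 1).symm (hf.adj 2)
    (hf.injective.ne (by decide)) hadj with h | h
  exacts [absurd h (hz.2 0), absurd h (hz.2 1)]

theorem keptVerts_rotate : keptVerts H D (fun i => f (i + 4)) = keptVerts H D f :=
  Set.ext fun _ => and_congr_right fun _ => (Equiv.addRight (2 : Fin 8)).forall_congr fun i => by
    simp only [(by decide : ∀ i : Fin 8, 2 * i + 1 + 4 = 2 * (i + 2) + 1), Equiv.coe_addRight]

theorem exists_four_colors (hf : IsLightOctagon H D f) (hD : ∀ v, H.degree v ≤ D)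
    (c : V → Fin (D + 1)) : ∃ a₁ a₃ a₅ a₇, a₁ ≠ a₇ ∧ a₃ ≠ a₅ ∧ a₁ ≠ a₃ ∧ a₅ ≠ a₇ ∧
      ∀ z ∈ keptVerts H D f, ((graphSquare H).Adj (f 1) z → a₁ ≠ c z) ∧
        ((graphSquare H).Adj (f 3) z → a₃ ≠ c z) ∧ ((graphSquare H).Adj (f 5) z → a₅ ≠ c z) ∧
        ((graphSquare H).Adj (f 7) z → a₇ ≠ c z) := by
  obtain ⟨a, b, hab, hc⟩ := hf.exists_ne_forall_graphSquare_adj_ne (hD _) c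
  obtain ⟨a', b', hab', hc'⟩ := hf.rotate.exists_ne_forall_graphSquare_adj_ne (hD _) c
  rw [keptVerts_rotate] at hc'
  have hswap : a ≠ a' ∧ b ≠ b' ∨ a ≠ b' ∧ b ≠ a' := by grind
  rcases hswap with ⟨ha, hb⟩ | ⟨ha, hb⟩
  · exact ⟨a, a', b', b, hab, hab', ha, hb.symm, fun z hz =>
      ⟨fun h => (hc z hz (.inl h)).1, fun h => (hc' z hz (.inr h)).1,
        fun h => (hc' z hz (.inl h)).2, fun h => (hc z hz (.inr h)).2⟩⟩
  · exact ⟨a, b', a', b, hab, hab'.symm, ha, hb.symm, fun z hz =>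
      ⟨fun h => (hc z hz (.inl h)).1, fun h => (hc' z hz (.inr h)).2,
        fun h => (hc' z hz (.inl h)).1, fun h => (hc z hz (.inr h)).2⟩⟩

theorem exists_isFrugalColoring {c : V → Fin (D + 1)} (hf : IsLightOctagon H D f)
    (hD : ∀ v, H.degree v ≤ D) (hc : (H.deleteIncidenceSet (f 2)).IsFrugalColoring 1 c) :
    ∃ c : V → Fin (D + 1), H.IsFrugalColoring 1 c := by
  classical
  obtain ⟨a₁, a₃, a₅, a₇, h₁₇, h₃₅, h₁₃, h₅₇, ha⟩ := hf.exists_four_colors hD c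
  have h15 : ¬ (graphSquare H).Adj (f 1) (f 5) := hf.not_graphSquare_adj_one_five
  have h73 : ¬ (graphSquare H).Adj (f 7) (f 3) := hf.reverse.not_graphSquare_adj_one_five
  have hne : f 7 ≠ f 1 := hf.injective.ne (by decide)
  have hcol := (hf.isColoringOn_keptVerts hc).update_pair h₁₇ (fun z hz => (ha z hz).1)
    fun z hz => (ha z hz).2.2.2
  set c' := Function.update (Function.update c (f 7) a₇) (f 1) a₁ with hc'
  have hc'1 : c' (f 1) = a₁ := Function.update_self ..
  have hc'7 : c' (f 7) = a₇ := by rw [hc', Function.update_of_ne hne, Function.update_self]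
  have hc'z : ∀ z ∈ keptVerts H D f, c' z = c z := fun z hz =>
    (Function.update_of_ne (hz.2 0) ..).trans (Function.update_of_ne (hz.2 3) ..)
  refine exists_isFrugalColoring_of_isColoringOn
    (hcol.update_pair (x := f 3) (y := f 5) h₃₅ ?_ ?_) fun x hx => ?_
  · rintro z (rfl | rfl | hz) hadj
    · exact hc'1 ▸ h₁₃.symm
    · exact absurd hadj.symm h73
    · exact hc'z z hz ▸ (ha z hz).2.1 hadj
  · rintro z (rfl | rfl | hz) hadj
    · exact absurd hadj.symm h15
    · exact hc'7 ▸ h₅₇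
    · exact hc'z z hz ▸ (ha z hz).2.2.1 hadj
  · have hcases : ∀ i : Fin 8, 2 * i + 1 = 3 ∨ 2 * i + 1 = 5 ∨ 2 * i + 1 = 1 ∨ 2 * i + 1 = 7 := by
      decide
    by_cases hodd : ∀ i, x ≠ f (2 * i + 1)
    · exact .inr (.inr (.inr (.inr ⟨hx, hodd⟩)))
    · obtain ⟨i, rfl⟩ := not_forall_not.1 hodd
      rcases hcases i with h | h | h | h <;> simp [h]

end IsLightOctagon

theorem IsLight.sum_one_add_div_lt {v : V} (hv : IsLight H D v) (hk : 1 ≤ k) :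
    ∑ y ∈ H.neighborFinset v, (1 + (H.degree y - 1) / k) < (D - 1 + (k - 1)) / k + 2 := by
  classical
  obtain ⟨a, ha, -⟩ := exists_adj_ne_of_degree_eq_two hv.1 v
  obtain ⟨b, hb, hab⟩ := exists_adj_ne_of_degree_eq_two hv.1 a
  have hsum := hv.2
  have hda := (H.degree_pos_iff_exists_adj a).2 ⟨v, ha.symm⟩
  have hdb := (H.degree_pos_iff_exists_adj b).2 ⟨v, hb.symm⟩
  rw [neighborFinset_of_degree_eq_two hv.1 ha hb hab, Finset.sum_pair hab] at hsum ⊢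
  have h1 : (H.degree a - 1) / k + (H.degree b - 1) / k ≤
    (H.degree a - 1 + (H.degree b - 1)) / k := Nat.div_add_div_le_add_div
  have h2 : (H.degree a - 1 + (H.degree b - 1)) / k + 1 ≤ (D - 1 + (k - 1)) / k := by
    rw [← Nat.add_div_right _ (by omega)]
    exact Nat.div_le_div_right (by omega)
  omega

theorem exists_isFrugalColoring_of_degree_eq_one {v : V} {c : V → Fin ((D - 1 + (k - 1)) / k + 2)}
    (hk : 1 ≤ k) (hc : (H.deleteIncidenceSet v).IsFrugalColoring k c) (hv : H.degree v = 1)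
    (hD : ∀ v, H.degree v ≤ D) :
    ∃ c : V → Fin ((D - 1 + (k - 1)) / k + 2), H.IsFrugalColoring k c := by
  classical
  refine exists_isFrugalColoring_of_deleteIncidenceSet hk hc (by omega) ?_
  obtain ⟨y, hy⟩ := Finset.card_eq_one.1 ((card_neighborFinset_eq_degree H v).trans hv)
  have hle : (H.degree y - 1) / k ≤ (D - 1 + (k - 1)) / k :=
    Nat.div_le_div_right (by have := hD y; omega)
  rw [hy, Finset.sum_singleton]
  omega

theorem avoidsReducible_of_minimal (hk : 1 ≤ k) (hD : ∀ v, H.degree v ≤ D) (hD1 : 1 ≤ D)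
    (hmin : ∀ v, H.degree v ≠ 0 → ∃ c : V → Fin ((D - 1 + (k - 1)) / k + 2),
      (H.deleteIncidenceSet v).IsFrugalColoring k c)
    (hno : ¬ ∃ c : V → Fin ((D - 1 + (k - 1)) / k + 2), H.IsFrugalColoring k c) :
    AvoidsReducible H D := by
  have hone : ∀ v, H.degree v ≠ 1 := fun v hv => by
    obtain ⟨c, hc⟩ := hmin v (by omega)
    exact hno (exists_isFrugalColoring_of_degree_eq_one hk hc hv hD)
  rcases hk.eq_or_lt with rfl | hk2
  · rw [Nat.div_one, Nat.sub_self, add_zero, (by omega : D - 1 + 2 = D + 1)] at hmin hno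
    refine ⟨hone, fun v u hv hvu => ?_, fun f hf => ?_⟩
    · by_contra! hle
      obtain ⟨c, hc⟩ := hmin v (by rw [hv.1]; omega)
      exact hno (exists_isFrugalColoring_of_sum_reducedDegree_le hc hv hvu hle)
    · obtain ⟨c, hc⟩ := hmin (f 2) (by rw [hf.isLight_two.1]; omega)
      exact hno (hf.exists_isFrugalColoring hD hc)
  · have hlight : ∀ v, ¬ IsLight H D v := fun v hv => by
      obtain ⟨c, hc⟩ := hmin v (by rw [hv.1]; omega)
      exact hno (exists_isFrugalColoring_of_deleteIncidenceSet hk hc (by rw [hv.1]; omega)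
        (hv.sum_one_add_div_lt hk))
    exact ⟨hone, fun v _ hv => absurd hv (hlight v), fun f hf => hlight _ hf.isLight_two⟩

theorem exists_isFrugalColoring_of_isPlanar (hk : 1 ≤ k) (hH : H.IsPlanar)
    (hg : (7 : ℕ∞) ≤ H.egirth) (hD : 162 ≤ D) (hdeg : ∀ v, H.degree v ≤ D) :
    ∃ c : V → Fin ((D - 1 + (k - 1)) / k + 2), H.IsFrugalColoring k c := by
  classical
  induction hm : H.edgeFinset.card using Nat.strong_induction_on generalizing H with
  | _ m ih =>
    subst hm
    by_contra hno
    have hR : AvoidsReducible H D := by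
      refine avoidsReducible_of_minimal hk hdeg (by omega) (fun v hv => ?_) hno
      have hle := H.deleteIncidenceSet_le v
      exact ih _ (card_edgeFinset_deleteIncidenceSet_lt hv) (isPlanar_of_le hH hle)
        (hg.trans (egirth_anti hle)) (fun u => (degree_le_of_le hle).trans (hdeg u)) rfl
    have hbot := hR.eq_bot hD hH hg
    exact hno ⟨fun _ => 0, fun u v h => by simp [hbot] at h, fun v a => by simp [hbot]⟩

end Reducible

theorem frugalChromaticNumber_girth_seven_general {V : Type*} [Finite V] {G : SimpleGraph V}
    [G.LocallyFinite] (hG : G.IsPlanar) (hgirth : (7 : ℕ∞) ≤ G.egirth) {D k : ℕ} (hk : 1 ≤ k)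
    (hD : 162 ≤ D) (hdeg : ∀ v, G.degree v ≤ D) :
    G.frugalChromaticNumber k ≤ (D - 1 + (k - 1)) / k + 2 := by
  classical
  have := Fintype.ofFinite V
  obtain ⟨c, hc⟩ := exists_isFrugalColoring_of_isPlanar hk hG hgirth hD fun v => by
    convert hdeg v
  exact frugalChromaticNumber_le hc

/-- For `k ≥ 1` and a planar graph `G` of girth at least `7` with `Δ(G) ≥ 190 + 2k`,
`χ_k(G) ≤ ⌈(Δ(G) - 1)/k⌉ + 2` (ceiling written `(a + k - 1)/k`). -/
theorem frugalChromaticNumber_girth_seven {V : Type*} [Fintype V] (G : SimpleGraph V)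
    [DecidableRel G.Adj] (hG : G.IsPlanar) (k : ℕ) (hk : 1 ≤ k)
    (hgirth : (7 : ℕ∞) ≤ G.egirth) (hΔ : 190 + 2 * k ≤ G.maxDegree) :
    G.frugalChromaticNumber k ≤ (G.maxDegree - 1 + (k - 1)) / k + 2 :=
  frugalChromaticNumber_girth_seven_general hG hgirth hk (by omega) G.degree_le_maxDegree
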